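/- arXiv:1712.07456 — 4 statements merged into one kernel-verified Lean document; each statement's English description precedes it below -/
import Mathlib

section
/- $\int_{0}^{\infty} \frac{dx}{\prod_{k=1}^{\infty}\left(1 + \frac{x^{3}}{k^{3}}\right)} = 8\pi \int_{0}^{\infty} \frac{e^{\sqrt{3}\, x}}{\left(2\cos x + e^{\sqrt{3}\, x}\right)^{3}}\, dx$. -/
/-!
Write `ω = e^{2πi/3}`. Gauss' limit formula gives `1 / ∏ (1 + x³/k³) = Γ(1+x) Γ(1+ωx) Γ(1+ω²x)`.
This function is invariant under `x ↦ ωx` and decays in the sector `|arg x| ≤ π/6`, so rotating the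
half-line to both boundary rays shows that `√3` times the left-hand integral is the integral of the
Gamma product over the imaginary axis (`integral_tripleGamma_imag`). Rotating the right-hand
integral in the same way expresses it through
`∫_ℝ e^{√12 iξ} / (1 + 2 e^{√3 iξ} cosh ξ)³ dξ` (`integral_sliceIntegrand_end`).

Both real-line integrals are the values at `τ = √3/2` of functions of a complex parameter,
`A(τ) = ∫ Γ(1+iξ) Γ(1-iξ/2-τξ) Γ(1-iξ/2+τξ) dξ` and
`B(τ) = ∫ e^{4iτξ} / (1 + 2 e^{2iτξ} cosh ξ)³ dξ`,
holomorphic in the strip `|Im τ| < 1/2`; the estimates behind this come from the reflection formula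
and the bound `|Γ(u) Γ(v)| ≤ |Γ(u+v)|` for `Re u, Re v ≥ 1`.

For `τ = is` with `s` real, the last two Gamma factors are `Γ(2-iξ)` times a Beta integral, which
over the real line reads `2 ∫ (2 cosh x)^{-2} e^{iξ (log (2 cosh x) - 2sx)} dx`. The function
`Γ(1+iξ) Γ(2-iξ)` is itself, up to scaling, the Fourier transform of `4 e^{-x} / (2 cosh x)³`, so
Fubini and Fourier inversion give `A(is) = 8π B(is)` (`integral_gammaFamily_slice`). By the identity
theorem `A = 8π B` on the whole strip, in particular at `τ = √3/2`.
-/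

section Helpers

open MeasureTheory Set Filter Topology

/-! ### Integrals depending on a parameter and rotation of contours -/

theorem integrable_exp_neg_mul_abs {c : ℝ} (hc : 0 < c) :
    Integrable (fun x : ℝ => Real.exp (-(c * |x|))) := by
  have h : IntegrableOn (fun x : ℝ => Real.exp (-(c * |x|))) (Ioi 0) := by
    refine (exp_neg_integrableOn_Ioi 0 hc).congr_fun (fun x hx => ?_) measurableSet_Ioi
    simp only [abs_of_pos (show (0:ℝ) < x from hx), neg_mul]
  have h' : IntegrableOn (fun x : ℝ => Real.exp (-(c * |x|))) (Iic 0) := by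
    rw [integrableOn_Iic_iff_integrableOn_Iio]
    have := h.comp_neg
    simpa using this
  rw [← integrableOn_univ, ← Iic_union_Ioi (a := (0:ℝ))]
  exact h'.union h

/-- Locally dominated integrals of holomorphic functions are holomorphic. No bound on the
`z`-derivative is assumed: the Cauchy estimates supply one. -/
theorem differentiableOn_integral {U : Set ℂ} (F : ℂ → ℝ → ℂ)
    (hd : ∀ a, DifferentiableOn ℂ (fun z => F z a) U)
    (hm : ∀ z ∈ U, AEStronglyMeasurable (F z) volume)
    (hb : ∀ z₀ ∈ U, ∃ r > 0, ∃ b : ℝ → ℝ, Integrable b ∧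
      ∀ z ∈ Metric.ball z₀ r, z ∈ U ∧ ∀ a, ‖F z a‖ ≤ b a) :
    DifferentiableOn ℂ (fun z => ∫ a, F z a) U := by
  intro z₀ hz₀
  obtain ⟨r, hr, b, hbi, hb⟩ := hb z₀ hz₀
  have hball : Metric.ball z₀ r ⊆ U := fun z hz => (hb z hz).1
  have hdAt : ∀ a, ∀ z ∈ Metric.ball z₀ r, DifferentiableAt ℂ (fun z => F z a) z := fun a z hz =>
    ((hd a).mono hball).differentiableAt (Metric.isOpen_ball.mem_nhds hz)
  have hz₀' : z₀ ∈ Metric.ball z₀ r := Metric.mem_ball_self hr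
  refine (hasDerivAt_integral_of_dominated_loc_of_deriv_le (F := F)
    (F' := fun z a => deriv (fun z => F z a) z) (bound := fun a => b a / (r / 2))
    (Metric.ball_mem_nhds z₀ (half_pos hr)) ?_ ?_ ?_ ?_ ?_
    ?_).2.differentiableAt.differentiableWithinAt
  · filter_upwards [Metric.ball_mem_nhds z₀ hr] with z hz using hm z (hball hz)
  · exact hbi.mono' (hm z₀ hz₀) (Eventually.of_forall fun a => (hb z₀ hz₀').2 a)
  · -- the derivative is a pointwise limit of difference quotients
    let s : ℕ → ℂ := fun n => ((r / (n + 2) : ℝ) : ℂ)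
    have hs0 : ∀ n, s n ≠ 0 := fun n => by
      simp only [s, ne_eq, Complex.ofReal_eq_zero]; positivity
    have hsU : ∀ n, z₀ + s n ∈ U := fun n => by
      apply hball
      rw [Metric.mem_ball, dist_eq_norm, add_sub_cancel_left]
      simp only [s, Complex.norm_real, Real.norm_eq_abs]
      rw [abs_of_pos (by positivity)]
      apply div_lt_self hr
      have : (0:ℝ) ≤ n := n.cast_nonneg
      linarith
    have hst : Tendsto s atTop (𝓝[≠] 0) := by
      rw [tendsto_nhdsWithin_iff]
      refine ⟨?_, Eventually.of_forall hs0⟩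
      have : Tendsto (fun n : ℕ => r / ((n:ℝ) + 2)) atTop (𝓝 0) :=
        tendsto_const_nhds.div_atTop
          (tendsto_atTop_add_const_right _ _ tendsto_natCast_atTop_atTop)
      have h2 := (Complex.continuous_ofReal.tendsto 0).comp this
      rw [Complex.ofReal_zero] at h2
      exact h2
    refine aestronglyMeasurable_of_tendsto_ae atTop
      (f := fun n a => (s n)⁻¹ • (F (z₀ + s n) a - F z₀ a)) (fun n => ?_) ?_
    · exact AEStronglyMeasurable.const_smul ((hm _ (hsU n)).sub (hm _ hz₀)) (s n)⁻¹
    · refine Eventually.of_forall fun a => ?_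
      have := (hdAt a z₀ hz₀').hasDerivAt
      rw [hasDerivAt_iff_tendsto_slope_zero] at this
      exact this.comp hst
  · refine Eventually.of_forall fun a z hz => ?_
    have hsub : Metric.closedBall z (r / 2) ⊆ Metric.ball z₀ r := by
      intro w hw
      rw [Metric.mem_ball] at *
      rw [Metric.mem_closedBall] at hw
      linarith [dist_triangle w z z₀]
    refine Complex.norm_deriv_le_of_forall_mem_sphere_norm_le (half_pos hr) ?_ ?_
    · refine DifferentiableOn.diffContOnCl fun w hw => ?_
      rw [closure_ball z (half_pos hr).ne'] at hw
      exact (hdAt a w (hsub hw)).differentiableWithinAt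
    · intro w hw
      exact (hb w (hsub (Metric.sphere_subset_closedBall hw))).2 a
  · exact hbi.div_const _
  · refine Eventually.of_forall fun a z hz => (hdAt a z ?_).hasDerivAt
    exact Metric.ball_subset_ball (by linarith) hz

/-- Cauchy's theorem in the sector `0 ≤ arg z ≤ φ` (or `φ ≤ arg z ≤ 0`), for integrands decaying
like `1 / (1 + |z|²)`. With `z = exp w` the sector becomes the strip `0 ≤ Im w ≤ φ` and the origin
goes to infinity, so that the integrand need not be controlled at `z = 0` and only rectangles
occur. -/
theorem integral_Ioi_eq_rotate (g : ℂ → ℂ) (φ C : ℝ)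
    (hd : ∀ r : ℝ, 0 < r → ∀ θ ∈ uIcc 0 φ, DifferentiableAt ℂ g (r * Complex.exp (θ * Complex.I)))
    (hb : ∀ r : ℝ, 0 < r → ∀ θ ∈ uIcc 0 φ,
      ‖g ((r : ℝ) * Complex.exp (θ * Complex.I))‖ ≤ C / (1 + r ^ 2)) :
    ∫ x in Ioi (0 : ℝ), g x =
      Complex.exp (φ * Complex.I) *
        ∫ x in Ioi (0 : ℝ), g (x * Complex.exp (φ * Complex.I)) := by
  let k : ℂ → ℂ := fun w => Complex.exp w * g (Complex.exp w)
  have hk : ∀ u θ : ℝ, k (u + θ * Complex.I) = (Real.exp u : ℂ) * Complex.exp (θ * Complex.I) *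
      g ((Real.exp u : ℝ) * Complex.exp (θ * Complex.I)) := by
    intro u θ
    simp only [k, Complex.exp_add, Complex.ofReal_exp]
  have hC : 0 ≤ C := by
    have := (norm_nonneg _).trans (hb 1 one_pos 0 left_mem_uIcc)
    norm_num at this
    linarith
  have hkb : ∀ u : ℝ, ∀ θ ∈ uIcc 0 φ, ‖k (u + θ * Complex.I)‖ ≤ C * Real.exp (-(1 * |u|)) := by
    intro u θ hθ
    rw [hk, norm_mul, norm_mul, Complex.norm_exp_ofReal_mul_I, Complex.norm_real, mul_one,
      Real.norm_of_nonneg (Real.exp_pos u).le]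
    refine (mul_le_mul_of_nonneg_left (hb _ (Real.exp_pos u) θ hθ) (Real.exp_pos u).le).trans ?_
    rw [mul_div_assoc', mul_comm, mul_div_assoc]
    refine mul_le_mul_of_nonneg_left ?_ hC
    have h0 := Real.exp_pos u
    rw [div_le_iff₀ (by positivity), one_mul]
    rcases abs_cases u with ⟨h, _⟩ | ⟨h, _⟩ <;> rw [h]
    · rw [Real.exp_neg, inv_mul_eq_div, le_div_iff₀ h0]
      nlinarith
    · rw [neg_neg]
      nlinarith [sq_nonneg (Real.exp u), mul_nonneg h0.le (sq_nonneg (Real.exp u))]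
  have hkd : ∀ u : ℝ, ∀ θ ∈ uIcc 0 φ, DifferentiableAt ℂ k (u + θ * Complex.I) := by
    intro u θ hθ
    refine Complex.differentiableAt_exp.mul (DifferentiableAt.comp _ ?_ Complex.differentiableAt_exp)
    have := hd _ (Real.exp_pos u) θ hθ
    rwa [Complex.exp_add, ← Complex.ofReal_exp]
  have hki : ∀ θ ∈ uIcc 0 φ, Integrable (fun u : ℝ => k (u + θ * Complex.I)) := by
    intro θ hθ
    refine ((integrable_exp_neg_mul_abs one_pos).const_mul C).mono' ?_
      (Eventually.of_forall fun u => hkb u θ hθ)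
    refine Continuous.aestronglyMeasurable (continuous_iff_continuousAt.2 fun u => ?_)
    exact (hkd u θ hθ).continuousAt.comp (f := fun u : ℝ => (u : ℂ) + θ * Complex.I) (by fun_prop)
  -- substitution `x = exp u`
  have hsub : ∀ θ : ℝ, ∫ u : ℝ, k (u + θ * Complex.I) =
      Complex.exp (θ * Complex.I) *
        ∫ x in Ioi (0 : ℝ), g (x * Complex.exp (θ * Complex.I)) := by
    intro θ
    have h := integral_image_eq_integral_abs_deriv_smul (s := univ) (f := Real.exp)
      (f' := Real.exp) MeasurableSet.univ (fun x _ => (Real.hasDerivAt_exp x).hasDerivWithinAt)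
      Real.exp_injective.injOn (fun x => g (x * Complex.exp (θ * Complex.I)))
    rw [image_univ, Real.range_exp, setIntegral_univ] at h
    rw [h, ← integral_const_mul]
    congr 1
    ext u
    rw [hk, abs_of_pos (Real.exp_pos u), Complex.real_smul]
    ring
  have hrect : ∀ R : ℝ, (∫ u in (-R)..R, k (u + (0:ℝ) * Complex.I)) -
      (∫ u in (-R)..R, k (u + φ * Complex.I)) =
      Complex.I • (∫ y in (0:ℝ)..φ, k ((-R : ℝ) + y * Complex.I)) -
        Complex.I • ∫ y in (0:ℝ)..φ, k (R + y * Complex.I) := by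
    intro R
    have h := Complex.integral_boundary_rect_eq_zero_of_differentiableOn k
      (⟨-R, 0⟩ : ℂ) ⟨R, φ⟩ ?_
    · simp only at h
      linear_combination h
    · intro w hw
      have := hkd w.re w.im hw.2
      rw [Complex.re_add_im] at this
      exact this.differentiableWithinAt
  have hside : ∀ R : ℝ, ‖∫ y in (0:ℝ)..φ, k (R + y * Complex.I)‖ ≤
      C * Real.exp (-(1 * |R|)) * |φ - 0| := fun R =>
    intervalIntegral.norm_integral_le_of_norm_le_const fun y hy =>
      hkb R y (uIoc_subset_uIcc hy)
  have hlim : ∀ θ ∈ uIcc 0 φ, Tendsto (fun R : ℝ => ∫ u in (-R)..R, k (u + θ * Complex.I)) atTop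
      (𝓝 (∫ u : ℝ, k (u + θ * Complex.I))) := fun θ hθ =>
    intervalIntegral_tendsto_integral (hki θ hθ) tendsto_neg_atTop_atBot tendsto_id
  have h0 := (hlim 0 left_mem_uIcc).sub (hlim φ right_mem_uIcc)
  simp_rw [hrect] at h0
  have h1 : Tendsto (fun R : ℝ => Complex.I • (∫ y in (0:ℝ)..φ, k ((-R : ℝ) + y * Complex.I)) -
        Complex.I • ∫ y in (0:ℝ)..φ, k (R + y * Complex.I)) atTop (𝓝 0) := by
    refine squeeze_zero_norm' (a := fun R => 2 * (C * Real.exp (-R) * |φ - 0|)) ?_ ?_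
    · filter_upwards [eventually_ge_atTop 0] with R hR
      refine (norm_sub_le _ _).trans ?_
      have ha := hside R
      have hb := hside (-R)
      rw [abs_neg] at hb
      rw [abs_of_nonneg hR, one_mul] at ha hb
      rw [norm_smul, norm_smul, Complex.norm_I, one_mul, one_mul]
      linarith
    · have : Tendsto (fun R : ℝ => Real.exp (-R)) atTop (𝓝 0) :=
        Real.tendsto_exp_neg_atTop_nhds_zero
      simpa using ((this.const_mul C).mul_const |φ - 0|).const_mul 2
  have h2 := tendsto_nhds_unique h0 h1
  rw [hsub, hsub, sub_eq_zero] at h2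
  simpa using h2

/-! ### The product as a triple of Gamma functions -/

/-- If `Q` on the two half-lines is `g` on the rays `arg z = ±π/6`, rotating both rays onto the
positive axis gives the factor `e^{-iπ/6} + e^{iπ/6} = √3`. -/
theorem integral_eq_sqrt_three_mul (g : ℂ → ℂ) (Q : ℝ → ℂ) (C : ℝ)
    (hd : ∀ r : ℝ, 0 < r → ∀ θ : ℝ, |θ| ≤ Real.pi / 6 →
      DifferentiableAt ℂ g (r * Complex.exp (θ * Complex.I)))
    (hb : ∀ r : ℝ, 0 < r → ∀ θ : ℝ, |θ| ≤ Real.pi / 6 →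
      ‖g (r * Complex.exp (θ * Complex.I))‖ ≤ C / (1 + r ^ 2))
    (hp : ∀ r : ℝ, 0 < r → Q r = g (r * Complex.exp (((Real.pi / 6 : ℝ) : ℂ) * Complex.I)))
    (hn : ∀ r : ℝ, 0 < r → Q (-r) = g (r * Complex.exp (((-(Real.pi / 6) : ℝ) : ℂ) * Complex.I))) :
    ∫ x, Q x = Real.sqrt 3 * ∫ x in Ioi (0 : ℝ), g x := by
  have hpi := Real.pi_pos
  have key : ∀ φ : ℝ, |φ| ≤ Real.pi / 6 →
      IntegrableOn (fun x : ℝ => g (x * Complex.exp (φ * Complex.I))) (Ioi 0) ∧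
      ∫ x in Ioi (0 : ℝ), g (x * Complex.exp (φ * Complex.I)) =
        Complex.exp (-(φ * Complex.I)) * ∫ x in Ioi (0 : ℝ), g x := by
    intro φ hφ
    have hle : ∀ θ ∈ uIcc 0 φ, |θ| ≤ Real.pi / 6 := fun θ hθ => by
      have := abs_sub_left_of_mem_uIcc hθ
      rw [sub_zero, sub_zero] at this
      exact this.trans hφ
    constructor
    · refine ((integrable_inv_one_add_sq.const_mul C).integrableOn).mono' ?_ ?_
      · refine ContinuousOn.aestronglyMeasurable (fun x hx => ?_) measurableSet_Ioi
        refine ContinuousAt.continuousWithinAt ?_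
        exact (hd x hx φ hφ).continuousAt.comp
          (f := fun x : ℝ => (x : ℂ) * Complex.exp (φ * Complex.I)) (by fun_prop)
      · exact (ae_restrict_iff' measurableSet_Ioi).2 (Eventually.of_forall fun x hx =>
          (hb x hx φ hφ).trans_eq (div_eq_mul_inv _ _))
    · rw [integral_Ioi_eq_rotate g φ C (fun r hr θ hθ => hd r hr θ (hle θ hθ))
        (fun r hr θ hθ => hb r hr θ (hle θ hθ)), ← mul_assoc, ← Complex.exp_add]
      simp
  obtain ⟨hi1, he1⟩ := key (Real.pi / 6) (abs_of_pos (by positivity)).le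
  obtain ⟨hi2, he2⟩ := key (-(Real.pi / 6)) (by rw [abs_neg, abs_of_pos (by positivity)])
  have hc1 : EqOn (fun x : ℝ => g (x * Complex.exp (((Real.pi / 6 : ℝ) : ℂ) * Complex.I))) Q
    (Ioi 0) := fun x hx => (hp x hx).symm
  have hc2 : EqOn (fun x : ℝ => g (x * Complex.exp (((-(Real.pi / 6) : ℝ) : ℂ) * Complex.I)))
    (fun x => Q (-x)) (Ioi 0) := fun x hx => (hn x hx).symm
  have hi1' : IntegrableOn Q (Ioi 0) := hi1.congr_fun hc1 measurableSet_Ioi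
  have hi2' : IntegrableOn Q (Iic 0) := by
    rw [integrableOn_Iic_iff_integrableOn_Iio]
    simpa using (hi2.congr_fun hc2 measurableSet_Ioi).comp_neg
  rw [setIntegral_congr_fun measurableSet_Ioi hc1] at he1
  rw [setIntegral_congr_fun measurableSet_Ioi hc2, integral_comp_neg_Ioi, neg_zero] at he2
  rw [← intervalIntegral.integral_Iic_add_Ioi hi2' hi1', he1, he2, ← add_mul]
  congr 1
  have h := Complex.two_cos ((Real.pi / 6 : ℝ) : ℂ)
  rw [← Complex.ofReal_cos, Real.cos_pi_div_six] at h
  push_cast at h ⊢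
  rw [neg_mul, neg_neg]
  rw [neg_mul] at h
  linear_combination -h

/-- The primitive cube root of unity `e^{2πi/3}`. -/
noncomputable def om : ℂ := -1 / 2 + Real.sqrt 3 / 2 * Complex.I

theorem om_sq : om ^ 2 = -1 - om := by
  have h : ((Real.sqrt 3 : ℝ) : ℂ) ^ 2 = 3 := by
    rw [← Complex.ofReal_pow, Real.sq_sqrt (by norm_num)]; norm_num
  unfold om
  linear_combination (1/4 : ℂ) * Complex.I ^ 2 * h + (3 / 4) * Complex.I_sq

theorem om_cube : om ^ 3 = 1 := by
  linear_combination (om - 1) * om_sq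

/-- `Γ(1+x) Γ(1+ωx) Γ(1+ω²x)`, the meromorphic continuation of `1 / ∏ (1 + x³/k³)`. It is
invariant under `x ↦ ωx`. -/
noncomputable def tripleGamma (x : ℂ) : ℂ :=
  Complex.Gamma (1 + x) * Complex.Gamma (1 + om * x) * Complex.Gamma (1 + om ^ 2 * x)

theorem tripleGamma_om_mul (x : ℂ) : tripleGamma (om * x) = tripleGamma x := by
  have h : om ^ 2 * (om * x) = x := by linear_combination x * om_cube
  rw [tripleGamma, tripleGamma, h, ← mul_assoc om om x, ← sq]
  ring

/-- The finite form of the product formula: since `1 + ω + ω² = 0` the powers of `n` in the three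
Gauss sequences multiply to `n³`, and `(j+x)(j+ωx)(j+ω²x) = j³ + x³`. -/
theorem gammaSeq_mul_gammaSeq_mul_gammaSeq (x : ℂ) {n : ℕ} (hn : n ≠ 0) :
    Complex.GammaSeq (1 + x) n * Complex.GammaSeq (1 + om * x) n *
      Complex.GammaSeq (1 + om ^ 2 * x) n =
    ((n : ℂ) / (n + 1)) ^ 3 * (∏ j ∈ Finset.range (n + 1), (1 + x ^ 3 / ((j : ℂ) + 1) ^ 3))⁻¹ := by
  have hn' : (n : ℂ) ≠ 0 := Nat.cast_ne_zero.2 hn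
  have hn1 : (n : ℂ) + 1 ≠ 0 := by exact_mod_cast n.succ_ne_zero
  have hprod : (∏ j ∈ Finset.range (n + 1), (1 + x ^ 3 / ((j : ℂ) + 1) ^ 3)) =
      ((∏ j ∈ Finset.range (n + 1), (1 + x + j)) * (∏ j ∈ Finset.range (n + 1), (1 + om * x + j)) *
      (∏ j ∈ Finset.range (n + 1), (1 + om ^ 2 * x + j))) / ((n + 1).factorial : ℂ) ^ 3 := by
    rw [← Finset.prod_mul_distrib, ← Finset.prod_mul_distrib,
      ← Finset.prod_range_add_one_eq_factorial]
    push_cast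
    rw [← Finset.prod_pow, ← Finset.prod_div_distrib]
    refine Finset.prod_congr rfl fun j _ => ?_
    have hj : (j : ℂ) + 1 ≠ 0 := by exact_mod_cast j.succ_ne_zero
    rw [eq_div_iff (pow_ne_zero 3 hj), add_mul, div_mul_cancel₀ _ (pow_ne_zero 3 hj)]
    set J : ℂ := (j : ℂ) + 1
    have e : (1 + x + j) * (1 + om * x + j) * (1 + om ^ 2 * x + (j : ℂ)) =
      (J + x) * (J + om * x) * (J + om ^ 2 * x) := by simp only [J]; ring
    rw [e]
    linear_combination (-(J * x ^ 2 * om + J ^ 2 * x)) * om_sq - x ^ 3 * om_cube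
  have hpow : (n : ℂ) ^ (1 + x) * (n : ℂ) ^ (1 + om * x) * (n : ℂ) ^ (1 + om ^ 2 * x) =
      (n : ℂ) ^ 3 := by
    rw [← Complex.cpow_add _ _ hn', ← Complex.cpow_add _ _ hn']
    have : 1 + x + (1 + om * x) + (1 + om ^ 2 * x) = (3 : ℕ) := by
      push_cast
      linear_combination x * om_sq
    rw [this, Complex.cpow_natCast]
  have hf : ((n + 1).factorial : ℂ) = (n + 1) * n.factorial := by
    rw [Nat.factorial_succ]; push_cast; ring
  have hf0 : (n.factorial : ℂ) ≠ 0 := Nat.cast_ne_zero.2 n.factorial_ne_zero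
  rw [hprod, inv_div, hf, div_pow, ← hpow]
  simp only [Complex.GammaSeq]
  field_simp

theorem tendsto_inv_prod (x : ℂ) :
    Tendsto (fun n : ℕ => (∏ j ∈ Finset.range (n + 1), (1 + x ^ 3 / ((j : ℂ) + 1) ^ 3))⁻¹) atTop
      (𝓝 (tripleGamma x)) := by
  have h1 := ((Complex.GammaSeq_tendsto_Gamma (1 + x)).mul
    (Complex.GammaSeq_tendsto_Gamma (1 + om * x))).mul
    (Complex.GammaSeq_tendsto_Gamma (1 + om ^ 2 * x))
  have h2 : Tendsto (fun n : ℕ => (((n : ℂ) / (n + 1)) ^ 3)⁻¹) atTop (𝓝 ((1 : ℂ) ^ 3)⁻¹) := by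
    refine Tendsto.inv₀ (Tendsto.pow ?_ 3) (by norm_num)
    exact tendsto_natCast_div_add_atTop (1 : ℂ)
  have h3 := h2.mul h1
  rw [one_pow, inv_one, one_mul] at h3
  refine h3.congr' ?_
  filter_upwards [eventually_ne_atTop 0] with n hn
  have hn' : (n : ℂ) ≠ 0 := Nat.cast_ne_zero.2 hn
  have hn1 : (n : ℂ) + 1 ≠ 0 := by exact_mod_cast n.succ_ne_zero
  rw [gammaSeq_mul_gammaSeq_mul_gammaSeq x hn, inv_mul_cancel_left₀]
  exact pow_ne_zero _ (div_ne_zero hn' hn1)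

theorem one_le_prod_range (f : ℕ → ℝ) (hf : ∀ k, 1 ≤ f k) (n : ℕ) :
    1 ≤ ∏ k ∈ Finset.range n, f k := by
  induction n with
  | zero => simp
  | succ n ih =>
    rw [Finset.prod_range_succ]
    exact one_le_mul_of_one_le_of_one_le ih (hf n)

/-- When `Re x³ ≥ 0` every factor of the product has modulus at least `1`, so the first one alone
bounds the reciprocal. -/
theorem norm_tripleGamma_le {x : ℂ} (hx : 0 ≤ (x ^ 3).re) : ‖tripleGamma x‖ ≤ ‖1 + x ^ 3‖⁻¹ := by
  refine le_of_tendsto (tendsto_inv_prod x).norm (Eventually.of_forall fun n => ?_)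
  have h1 : ∀ j : ℕ, 1 ≤ ‖1 + x ^ 3 / ((j : ℂ) + 1) ^ 3‖ := fun j => by
    refine le_trans ?_ (Complex.re_le_norm _)
    have : ((j : ℂ) + 1) ^ 3 = (((j + 1 : ℝ) ^ 3 : ℝ) : ℂ) := by push_cast; ring
    rw [this, Complex.add_re, Complex.div_ofReal_re, Complex.one_re]
    have : 0 ≤ (x ^ 3).re / ((j + 1 : ℝ) ^ 3) := by positivity
    linarith
  have h0 : 0 < ‖1 + x ^ 3‖ := by
    have := h1 0
    norm_num at this
    linarith
  rw [norm_inv, norm_prod, Finset.prod_range_succ']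
  refine inv_anti₀ h0 ?_
  have h2 : 1 ≤ ∏ k ∈ Finset.range n, ‖1 + x ^ 3 / (((k + 1 : ℕ) : ℂ) + 1) ^ 3‖ :=
    one_le_prod_range _ (fun k => h1 (k + 1)) n
  have h3 : 1 + x ^ 3 / (((0 : ℕ) : ℂ) + 1) ^ 3 = 1 + x ^ 3 := by simp
  rw [h3]
  exact le_mul_of_one_le_left h0.le h2

theorem re_cube_nonneg {r θ : ℝ} (hr : 0 < r) (hθ : |θ| ≤ Real.pi / 6) :
    0 ≤ (((r : ℂ) * Complex.exp (θ * Complex.I)) ^ 3).re := by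
  have : ((r : ℂ) * Complex.exp (θ * Complex.I)) ^ 3 =
      ((r ^ 3 : ℝ) : ℂ) * Complex.exp (((3 * θ : ℝ) : ℂ) * Complex.I) := by
    rw [mul_pow, ← Complex.exp_nat_mul]
    push_cast
    ring_nf
  rw [this, Complex.re_ofReal_mul, Complex.exp_ofReal_mul_I_re]
  have h := abs_le.1 hθ
  have := Real.cos_nonneg_of_mem_Icc (x := 3 * θ) ⟨by linarith, by linarith⟩
  positivity

theorem norm_tripleGamma_le_sector {r θ : ℝ} (hr : 0 < r) (hθ : |θ| ≤ Real.pi / 6) :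
    ‖tripleGamma (r * Complex.exp (θ * Complex.I))‖ ≤ 2 / (1 + r ^ 2) := by
  have h := re_cube_nonneg hr hθ
  refine (norm_tripleGamma_le h).trans ?_
  set x := (r : ℂ) * Complex.exp (θ * Complex.I) with hx
  have hn : ‖x‖ = r := by
    rw [hx, norm_mul, Complex.norm_exp_ofReal_mul_I, Complex.norm_real, mul_one,
      Real.norm_of_nonneg hr.le]
  have h1 : 1 + (r ^ 3) ^ 2 ≤ ‖1 + x ^ 3‖ ^ 2 := by
    have e : r ^ 3 = ‖x ^ 3‖ := by rw [norm_pow, hn]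
    rw [e, Complex.sq_norm, Complex.sq_norm, Complex.normSq_apply, Complex.normSq_apply]
    simp only [Complex.add_re, Complex.add_im, Complex.one_re, Complex.one_im]
    nlinarith
  have h2 : (1 + r ^ 2) / 2 ≤ ‖1 + x ^ 3‖ := by
    refine (pow_le_pow_iff_left₀ (by positivity) (norm_nonneg _) two_ne_zero).1 ?_
    nlinarith [sq_nonneg (r^2 - 1), sq_nonneg r, mul_nonneg (sq_nonneg r) (sq_nonneg (r ^ 2 - 1))]
  rw [← inv_div]
  exact inv_anti₀ (by positivity) h2

theorem differentiableAt_tripleGamma {x : ℂ} (hx : 0 ≤ (x ^ 3).re) :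
    DifferentiableAt ℂ tripleGamma x := by
  have key : ∀ ζ : ℂ, ζ ^ 3 = 1 → DifferentiableAt ℂ (fun x => Complex.Gamma (1 + ζ * x)) x := by
    intro ζ hζ
    refine DifferentiableAt.comp x (Complex.differentiableAt_Gamma _ fun m hm => ?_) (by fun_prop)
    have e : x ^ 3 = ((-(m + 1 : ℝ) ^ 3 : ℝ) : ℂ) := by
      have : ζ * x = -(m + 1) := by linear_combination hm
      have h3 : (ζ * x) ^ 3 = x ^ 3 := by rw [mul_pow, hζ, one_mul]
      rw [← h3, this]
      push_cast
      ring
    rw [e, Complex.ofReal_re] at hx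
    have : (0 : ℝ) < (m + 1 : ℝ) ^ 3 := by positivity
    linarith
  have h1 := key 1 (by norm_num)
  simp only [one_mul] at h1
  exact (h1.mul (key om om_cube)).mul (key (om ^ 2) (by rw [← pow_mul, mul_comm, pow_mul, om_cube, one_pow]))

theorem ofReal_inv_tprod {x : ℝ} (hx : 0 < x) :
    (((∏' k : ℕ, (1 + x ^ 3 / ((k : ℝ) + 1) ^ 3))⁻¹ : ℝ) : ℂ) = tripleGamma x := by
  have hs : Summable fun k : ℕ => x ^ 3 / ((k : ℝ) + 1) ^ 3 := by
    have h := (summable_nat_add_iff 1).2 (Real.summable_one_div_nat_pow.2 (by norm_num : 1 < 3))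
    refine (h.mul_left (x ^ 3)).congr fun k => ?_
    push_cast
    ring
  have hm : Multipliable fun k : ℕ => 1 + x ^ 3 / ((k : ℝ) + 1) ^ 3 :=
    Real.multipliable_one_add_of_summable hs
  have ht := (tendsto_add_atTop_iff_nat 1).2 hm.hasProd.tendsto_prod_nat
  have h1 : 1 ≤ ∏' k : ℕ, (1 + x ^ 3 / ((k : ℝ) + 1) ^ 3) := by
    refine ge_of_tendsto ht (Eventually.of_forall fun n => ?_)
    refine one_le_prod_range _ (fun k => ?_) _
    have : 0 ≤ x ^ 3 / ((k : ℝ) + 1) ^ 3 := by positivity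
    linarith
  have h2 := (Complex.continuous_ofReal.tendsto _).comp (ht.inv₀ (by linarith))
  refine tendsto_nhds_unique (h2.congr fun n => ?_) (tendsto_inv_prod x)
  simp

/-- The left-hand integral on the imaginary axis: `ω · e^{-iπ/6} = i` and `ω · (-i) = e^{iπ/6}`, so by
invariance under `ω` the imaginary half-axes are equivalent to the rays `arg x = ∓π/6`. -/
theorem integral_tripleGamma_imag :
    ∫ ξ : ℝ, tripleGamma (Complex.I * ξ) =
      Real.sqrt 3 * ((∫ x in Ioi (0 : ℝ), (∏' k : ℕ, (1 + x ^ 3 / ((k : ℝ) + 1) ^ 3))⁻¹ : ℝ) : ℂ) := by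
  have h := integral_eq_sqrt_three_mul tripleGamma (fun ξ => tripleGamma (Complex.I * (-ξ : ℝ))) 2
    (fun r hr θ hθ => differentiableAt_tripleGamma (re_cube_nonneg hr hθ))
    (fun r hr θ hθ => norm_tripleGamma_le_sector hr hθ) ?_ ?_
  · rw [integral_neg_eq_self (fun ξ : ℝ => tripleGamma (Complex.I * ξ))] at h
    rw [h, ← integral_complex_ofReal]
    congr 1
    refine setIntegral_congr_fun measurableSet_Ioi fun x hx => ?_
    exact (ofReal_inv_tprod hx).symm
  · intro r hr
    rw [← tripleGamma_om_mul (Complex.I * _)]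
    congr 1
    rw [Complex.exp_mul_I, ← Complex.ofReal_cos, ← Complex.ofReal_sin, Real.cos_pi_div_six,
      Real.sin_pi_div_six, om]
    push_cast
    linear_combination (-(Real.sqrt 3 : ℂ) / 2 * r) * Complex.I_sq
  · intro r hr
    rw [neg_neg, ← tripleGamma_om_mul ((r : ℂ) * _)]
    congr 1
    have h3 : ((Real.sqrt 3 : ℝ) : ℂ) ^ 2 = 3 := by
      rw [← Complex.ofReal_pow, Real.sq_sqrt (by norm_num)]; norm_num
    rw [Complex.exp_mul_I, ← Complex.ofReal_cos, ← Complex.ofReal_sin, Real.cos_neg, Real.sin_neg,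
      Real.cos_pi_div_six, Real.sin_pi_div_six, om]
    push_cast
    linear_combination (r * (Real.sqrt 3 : ℂ) / 4) * Complex.I_sq - (r * Complex.I / 4) * h3

/-! ### The exponential integral as an integral over the real line -/

/-- The complex extension `2 cos z + e^{√3 z}` of the denominator on the right-hand side. -/
noncomputable def trigDen (z : ℂ) : ℂ := 2 * Complex.cos z + Complex.exp (Real.sqrt 3 * z)

/-- In the sector `|arg z| ≤ π/6` the denominator has no zeros and is comparable with `e^{√3 z}`:
for `Re z ≤ 1` its real part is bounded below, for `Re z ≥ 1` the exponential dominates. -/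
theorem norm_trigDen_ge {z : ℂ} (hx : 0 ≤ z.re) (hy : Real.sqrt 3 * |z.im| ≤ z.re) :
    Real.exp (Real.sqrt 3 * z.re) / 8 ≤ ‖trigDen z‖ := by
  set x := z.re with hxdef
  set y := z.im with hydef
  have hz : z = x + y * Complex.I := (Complex.re_add_im z).symm
  have hs0 : 0 < Real.sqrt 3 := Real.sqrt_pos.2 (by norm_num)
  have hs : Real.sqrt 3 ^ 2 = 3 := Real.sq_sqrt (by norm_num)
  have hs2 : Real.sqrt 3 ≤ 2 := by nlinarith
  have hs3 : 1.7 ≤ Real.sqrt 3 := by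
    by_contra! h
    nlinarith
  have he1 : Real.exp (Real.sqrt 3 * z.re) = ‖Complex.exp (Real.sqrt 3 * z)‖ := by
    rw [Complex.norm_exp, Complex.re_ofReal_mul]
  rcases le_total x 1 with h | h
  · refine le_trans ?_ (Complex.re_le_norm _)
    have e : (trigDen z).re = 2 * (Real.cos x * Real.cosh y) +
        Real.exp (Real.sqrt 3 * x) * Real.cos (Real.sqrt 3 * y) := by
      rw [trigDen, Complex.add_re, Complex.exp_re, Complex.re_ofReal_mul, Complex.im_ofReal_mul, hz,
        Complex.cos_add_mul_I, ← Complex.ofReal_cos, ← Complex.ofReal_sin, ← Complex.ofReal_cosh,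
        ← Complex.ofReal_sinh]
      simp only [Complex.mul_re, Complex.sub_re, Complex.ofReal_re, Complex.ofReal_im,
        Complex.mul_im, Complex.sub_im, Complex.re_ofNat, Complex.im_ofNat, Complex.I_re,
        Complex.I_im, Complex.add_re, Complex.add_im]
      ring_nf
    rw [e]
    have hpi := Real.pi_gt_three
    have h1 : 0 ≤ Real.cos (Real.sqrt 3 * y) := by
      have : |Real.sqrt 3 * y| ≤ 1 := by rw [abs_mul, abs_of_pos hs0]; linarith
      have := abs_le.1 this
      exact Real.cos_nonneg_of_mem_Icc ⟨by linarith, by linarith⟩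
    have h2 : 1 / 2 ≤ Real.cos x := by
      have := Real.one_sub_sq_div_two_le_cos (x := x)
      nlinarith
    have h3 := Real.one_le_cosh y
    have h4 : Real.exp (Real.sqrt 3 * x) ≤ 8 := by
      have : Real.exp (Real.sqrt 3 * x) ≤ Real.exp (1 + 1) := Real.exp_le_exp.2 (by nlinarith)
      rw [Real.exp_add] at this
      have h5 := Real.exp_one_lt_d9
      have h6 := Real.exp_pos 1
      nlinarith
    have h5 := mul_nonneg (Real.exp_pos (Real.sqrt 3 * x)).le h1
    nlinarith
  · have h1 : ‖2 * Complex.cos z‖ ≤ 2 * Real.exp |y| := by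
      rw [Complex.two_cos]
      refine (norm_add_le _ _).trans ?_
      rw [Complex.norm_exp, Complex.norm_exp]
      have e1 : (z * Complex.I).re = -y := by simp [hydef]
      have e2 : (-z * Complex.I).re = y := by simp [hydef]
      rw [e1, e2]
      have := Real.exp_le_exp.2 (neg_le_abs y)
      have := Real.exp_le_exp.2 (le_abs_self y)
      linarith
    have h2 : ‖Complex.exp (Real.sqrt 3 * z)‖ - ‖2 * Complex.cos z‖ ≤ ‖trigDen z‖ := by
      rw [trigDen, add_comm]
      have := norm_sub_norm_le (Complex.exp (Real.sqrt 3 * z)) (-(2 * Complex.cos z))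
      rwa [sub_neg_eq_add, norm_neg] at this
    rw [← he1] at h2
    set t := Real.sqrt 3 * x / 3 with ht
    have h3 : |y| ≤ t := by
      rw [ht]; nlinarith [mul_le_mul_of_nonneg_left hy hs0.le]
    have h4 : Real.exp |y| ≤ Real.exp t := Real.exp_le_exp.2 h3
    have e : Real.exp (Real.sqrt 3 * x) = Real.exp t * Real.exp (2 * t) := by
      rw [← Real.exp_add]; congr 1; rw [ht]; ring
    have ht1 : 0.56 ≤ t := by rw [ht]; nlinarith
    have h5 := Real.quadratic_le_exp_of_nonneg (x := 2 * t) (by linarith)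
    have h6 : 2.5 ≤ Real.exp (2 * t) := by nlinarith
    have h7 := Real.exp_pos t
    have h8 := mul_le_mul_of_nonneg_left h6 h7.le
    rw [e] at h2 ⊢
    linarith

/-- The integrand `e^{4iτξ} / (1 + 2 e^{2iτξ} cosh ξ)³`. For `τ = √3/2` it is the rotated integrand of
the right-hand side; for `τ = is` it is what Fourier inversion produces from `gammaFamily`. -/
noncomputable def sliceIntegrand (τ : ℂ) (ξ : ℝ) : ℂ :=
  Complex.exp (4 * τ * Complex.I * ξ) /
    (1 + 2 * Complex.exp (2 * τ * Complex.I * ξ) * Complex.cosh ξ) ^ 3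

theorem sector_re_im {r θ : ℝ} (hr : 0 < r) (hθ : |θ| ≤ Real.pi / 6) :
    Real.sqrt 3 / 2 * r ≤ ((r : ℂ) * Complex.exp (θ * Complex.I)).re ∧
    Real.sqrt 3 * |((r : ℂ) * Complex.exp (θ * Complex.I)).im| ≤
      ((r : ℂ) * Complex.exp (θ * Complex.I)).re := by
  have hpi := Real.pi_pos
  rw [Complex.re_ofReal_mul, Complex.im_ofReal_mul, Complex.exp_ofReal_mul_I_re,
    Complex.exp_ofReal_mul_I_im, abs_mul, abs_of_pos hr]
  have hc : Real.sqrt 3 / 2 ≤ Real.cos θ := by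
    rw [← Real.cos_pi_div_six, ← Real.cos_abs θ]
    exact Real.cos_le_cos_of_nonneg_of_le_pi (abs_nonneg _) (by linarith) hθ
  have hs : |Real.sin θ| ≤ 1 / 2 := by
    have h := abs_le.1 hθ
    rw [abs_le, ← Real.sin_pi_div_six, ← Real.sin_neg]
    exact ⟨Real.sin_le_sin_of_le_of_le_pi_div_two (by linarith) (by linarith) h.1,
      Real.sin_le_sin_of_le_of_le_pi_div_two (by linarith) (by linarith) h.2⟩
  have hs0 : 0 < Real.sqrt 3 := Real.sqrt_pos.2 (by norm_num)
  constructor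
  · nlinarith
  · have := mul_le_mul_of_nonneg_left hs (mul_pos hs0 hr).le
    nlinarith

/-- On the ray `z = r e^{± iπ/6}` one has `√3 z` and `± iz` as the three exponents of the denominator, and
pulling out `e^{∓ iz}` leaves `1 + 2 e^{±√3 i r} cosh r`. Here `s` is the sign of the ray. -/
theorem slice_eq (s : ℂ) (hs : s = 1 ∨ s = -1) (r : ℝ) :
    sliceIntegrand (Real.sqrt 3 / 2 : ℝ) (s.re * r) =
      Complex.exp (Real.sqrt 3 * (r * (Real.sqrt 3 / 2 + s * Complex.I / 2))) /
        trigDen (r * (Real.sqrt 3 / 2 + s * Complex.I / 2)) ^ 3 := by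
  have h3 : ((Real.sqrt 3 : ℝ) : ℂ) ^ 2 = 3 := by
    rw [← Complex.ofReal_pow, Real.sq_sqrt (by norm_num)]; norm_num
  have hsre : ((s.re : ℝ) : ℂ) = s := by rcases hs with rfl | rfl <;> simp
  have hs2 : s ^ 2 = 1 := by rcases hs with rfl | rfl <;> simp
  have hcosh : Complex.cosh ((r : ℂ) * s) = Complex.cosh r := by
    rcases hs with rfl | rfl <;> simp
  set z : ℂ := r * (Real.sqrt 3 / 2 + s * Complex.I / 2) with hz
  have hD : trigDen z = Complex.exp (-(s * z * Complex.I)) *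
      (1 + 2 * Complex.exp (2 * (Real.sqrt 3 / 2 : ℝ) * Complex.I * (s.re * r : ℝ)) *
        Complex.cosh (s.re * r : ℝ)) := by
    have h2 : 2 * Complex.cos z =
        Complex.exp (s * z * Complex.I) + Complex.exp (-(s * z * Complex.I)) := by
      rw [Complex.two_cos]
      rcases hs with rfl | rfl
      · simp
      · simp [add_comm]
    rw [trigDen, h2]
    push_cast
    rw [hsre, mul_comm s (r : ℂ), hcosh, Complex.cosh]
    have : Complex.exp (-(s * z * Complex.I)) * (1 + 2 *
        Complex.exp (2 * (Real.sqrt 3 / 2) * Complex.I * (r * s)) *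
        ((Complex.exp r + Complex.exp (-r)) / 2)) = Complex.exp (-(s * z * Complex.I)) +
        (Complex.exp (-(s * z * Complex.I)) *
        Complex.exp (2 * (Real.sqrt 3 / 2) * Complex.I * (r * s))) * Complex.exp r +
        Complex.exp (-(s * z * Complex.I)) *
        Complex.exp (2 * (Real.sqrt 3 / 2) * Complex.I * (r * s)) * Complex.exp (-r) := by ring
    rw [this, ← Complex.exp_add, ← Complex.exp_add, ← Complex.exp_add]
    have e1 : -(s * z * Complex.I) + 2 * (Real.sqrt 3 / 2) * Complex.I * (r * s) + -r =
        s * z * Complex.I := by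
      rw [hz]
      linear_combination (-(s ^ 2 * r)) * Complex.I_sq + r * hs2
    have e2 : -(s * z * Complex.I) + 2 * (Real.sqrt 3 / 2) * Complex.I * (r * s) + r =
        Real.sqrt 3 * z := by
      rw [hz]
      linear_combination (-(s ^ 2 * r) / 2) * Complex.I_sq + (r / 2) * hs2 - (r / 2) * h3
    rw [e1, e2]
    ring
  rw [hD, sliceIntegrand, mul_pow, ← Complex.exp_nat_mul, ← div_div, ← Complex.exp_sub]
  congr 2
  push_cast
  rw [hsre, hz]
  linear_combination (3 * r / 2) * hs2 - (3 * r * s ^ 2 / 2) * Complex.I_sq - (r / 2) * h3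

/-- The right-hand integral, rotated to the rays `arg z = ±π/6`, is the member `τ = √3/2` of the family
`sliceIntegrand`. -/
theorem integral_sliceIntegrand_end :
    ∫ ξ : ℝ, sliceIntegrand (Real.sqrt 3 / 2 : ℝ) ξ =
      Real.sqrt 3 * ((∫ x in Ioi (0 : ℝ), Real.exp (Real.sqrt 3 * x) /
        (2 * Real.cos x + Real.exp (Real.sqrt 3 * x)) ^ 3 : ℝ) : ℂ) := by
  have hs0 : 0 < Real.sqrt 3 := Real.sqrt_pos.2 (by norm_num)
  have hs : Real.sqrt 3 ^ 2 = 3 := Real.sq_sqrt (by norm_num)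
  have hne : ∀ r : ℝ, 0 < r → ∀ θ : ℝ, |θ| ≤ Real.pi / 6 →
      trigDen (r * Complex.exp (θ * Complex.I)) ≠ 0 := fun r hr θ hθ h0 => by
    obtain ⟨h1, h2⟩ := sector_re_im hr hθ
    have h := norm_trigDen_ge (le_trans (by positivity) h1) h2
    rw [h0, norm_zero] at h
    have := Real.exp_pos (Real.sqrt 3 * ((r : ℂ) * Complex.exp (θ * Complex.I)).re)
    linarith
  rw [integral_eq_sqrt_three_mul (fun z => Complex.exp (Real.sqrt 3 * z) / trigDen z ^ 3) _ 512]
  · rw [← integral_complex_ofReal]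
    congr 1
    refine setIntegral_congr_fun measurableSet_Ioi fun x hx => ?_
    simp only [trigDen]
    push_cast
    rfl
  · intro r hr θ hθ
    refine DifferentiableAt.div (by fun_prop) ?_ (pow_ne_zero 3 (hne r hr θ hθ))
    unfold trigDen
    fun_prop
  · intro r hr θ hθ
    obtain ⟨h1, h2⟩ := sector_re_im hr hθ
    have h := norm_trigDen_ge (le_trans (by positivity) h1) h2
    set z := (r : ℂ) * Complex.exp (θ * Complex.I)
    set E := Real.exp (Real.sqrt 3 * z.re) with hE
    have hE0 : 0 < E := Real.exp_pos _
    rw [norm_div, norm_pow, Complex.norm_exp, Complex.re_ofReal_mul, ← hE]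
    have h3 : (E / 8) ^ 3 ≤ ‖trigDen z‖ ^ 3 := pow_le_pow_left₀ (by positivity) h 3
    refine (div_le_div_of_nonneg_left hE0.le (by positivity) h3).trans ?_
    have h4 : E / (E / 8) ^ 3 = 512 / E ^ 2 := by field_simp; norm_num
    rw [h4]
    refine div_le_div_of_nonneg_left (by norm_num) (by positivity) ?_
    have h5 : Real.exp (3 * r) ≤ E ^ 2 := by
      rw [hE, ← Real.exp_nat_mul]
      refine Real.exp_le_exp.2 ?_
      push_cast
      nlinarith [mul_le_mul_of_nonneg_left h1 hs0.le]
    have h6 := Real.quadratic_le_exp_of_nonneg (x := 3 * r) (by positivity)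
    nlinarith
  · intro r hr
    have h := slice_eq 1 (Or.inl rfl) r
    rw [Complex.one_re, one_mul] at h
    rw [h]
    have e : Complex.exp (((Real.pi / 6 : ℝ) : ℂ) * Complex.I) =
        Real.sqrt 3 / 2 + 1 * Complex.I / 2 := by
      rw [Complex.exp_mul_I, ← Complex.ofReal_cos, ← Complex.ofReal_sin, Real.cos_pi_div_six,
        Real.sin_pi_div_six]
      push_cast
      ring
    rw [e]
  · intro r hr
    have h := slice_eq (-1) (Or.inr rfl) r
    rw [Complex.neg_re, Complex.one_re, neg_one_mul] at h
    rw [h]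
    have e : Complex.exp (((-(Real.pi / 6) : ℝ) : ℂ) * Complex.I) =
        Real.sqrt 3 / 2 + -1 * Complex.I / 2 := by
      rw [Complex.exp_mul_I, ← Complex.ofReal_cos, ← Complex.ofReal_sin, Real.cos_neg, Real.sin_neg,
        Real.cos_pi_div_six, Real.sin_pi_div_six]
      push_cast
      ring
    rw [e]

/-! ### Two holomorphic families on a strip -/

theorem abs_sinh_im_le_norm_sin (z : ℂ) : Real.sinh |z.im| ≤ ‖Complex.sin z‖ := by
  have h : 2 * Complex.sin z = (Complex.exp (-z * Complex.I) - Complex.exp (z * Complex.I)) *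
      Complex.I := Complex.two_sin z
  have h1 : 2 * ‖Complex.sin z‖ = ‖Complex.exp (-z * Complex.I) - Complex.exp (z * Complex.I)‖ := by
    rw [← Complex.norm_two, ← norm_mul, h, norm_mul, Complex.norm_I, mul_one]
  have e1 : (z * Complex.I).re = -z.im := by simp
  have e2 : (-z * Complex.I).re = z.im := by simp
  have h2 := abs_norm_sub_norm_le (Complex.exp (-z * Complex.I)) (Complex.exp (z * Complex.I))
  rw [Complex.norm_exp, Complex.norm_exp, e1, e2, ← h1] at h2
  rw [Real.sinh_eq]
  rcases abs_cases z.im with ⟨h, _⟩ | ⟨h, _⟩ <;> rw [h]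
  · linarith [le_abs_self (Real.exp z.im - Real.exp (-z.im))]
  · rw [neg_neg]
    linarith [neg_le_abs (Real.exp z.im - Real.exp (-z.im))]

theorem mul_exp_half_le_sinh {u : ℝ} (hu : 0 ≤ u) : u * Real.exp (u / 2) / 2 ≤ Real.sinh u := by
  have h1 : Real.sinh u = 2 * Real.sinh (u / 2) * Real.cosh (u / 2) := by
    rw [← Real.sinh_two_mul]; congr 1; ring
  have h2 : u / 2 ≤ Real.sinh (u / 2) := Real.self_le_sinh_iff.2 (by positivity)
  have h3 : Real.exp (u / 2) / 2 ≤ Real.cosh (u / 2) := by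
    rw [Real.cosh_eq]; linarith [Real.exp_pos (-(u / 2))]
  rw [h1]
  nlinarith [mul_le_mul h2 h3 (by positivity) (by linarith [div_nonneg hu zero_le_two])]

/-- By the reflection formula the product is `(1 - y) π y / sin (π y)`, which decays exponentially in
`|Im y|`. -/
theorem norm_Gamma_mul_Gamma_reflect_le {y : ℂ} {M δ ξ : ℝ} (hδ : 0 < δ) (hM : 0 ≤ M)
    (hy : ‖y‖ ≤ M * |ξ|) (hyi : δ * |ξ| ≤ |y.im|) :
    ‖Complex.Gamma (1 + y) * Complex.Gamma (2 - y)‖ ≤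
      (1 + (1 + 2 * M / δ) * (2 * M / δ)) * Real.exp (-(δ / 2 * |ξ|)) := by
  rcases eq_or_ne ξ 0 with rfl | hξ
  · have : y = 0 := by simpa using hy
    subst this
    have h2 : Complex.Gamma 2 = 1 := by simp
    simp only [add_zero, Complex.Gamma_one, sub_zero, h2, mul_one, norm_one, abs_zero, mul_zero,
      neg_zero, Real.exp_zero]
    have : 0 ≤ (1 + 2 * M / δ) * (2 * M / δ) := by positivity
    linarith
  have hξ' : 0 < |ξ| := abs_pos.2 hξ
  have him : 0 < |y.im| := lt_of_lt_of_le (by positivity) hyi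
  have hy0 : y ≠ 0 := fun h => by simp [h] at him
  have hy1 : 1 - y ≠ 0 := fun h => by
    have := congrArg Complex.im h
    simp at this
    simp [this] at him
  have hrec : Complex.Gamma (1 + y) * Complex.Gamma (2 - y) =
      (1 - y) * (Real.pi * y / Complex.sin (Real.pi * y)) := by
    have e : (2 : ℂ) - y = (1 - y) + 1 := by ring
    rw [add_comm 1 y, e, Complex.Gamma_add_one y hy0, Complex.Gamma_add_one _ hy1]
    have := Complex.Gamma_mul_Gamma_one_sub y
    linear_combination y * (1 - y) * this
  have hpi := Real.pi_gt_three
  set u := Real.pi * |y.im| with hu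
  have hu0 : 0 < u := by positivity
  have hsin : u * Real.exp (u / 2) / 2 ≤ ‖Complex.sin (Real.pi * y)‖ := by
    have h1 := abs_sinh_im_le_norm_sin (Real.pi * y)
    rw [Complex.im_ofReal_mul, abs_mul, abs_of_pos Real.pi_pos] at h1
    exact (mul_exp_half_le_sinh hu0.le).trans h1
  rw [hrec, norm_mul, norm_div, norm_mul, Complex.norm_real, Real.norm_of_nonneg Real.pi_pos.le]
  have hA : ‖1 - y‖ ≤ (1 + 2 * M / δ) * Real.exp (δ / 2 * |ξ|) := by
    have h1 : ‖1 - y‖ ≤ 1 + M * |ξ| := by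
      refine (norm_sub_le _ _).trans ?_
      rw [norm_one]; linarith
    have h2 := Real.add_one_le_exp (δ / 2 * |ξ|)
    have h3 : 0 ≤ 1 + 2 * M / δ := by positivity
    have h4 := mul_le_mul_of_nonneg_left h2 h3
    have h5 : (1 + 2 * M / δ) * (δ / 2 * |ξ| + 1) =
      1 + M * |ξ| + δ / 2 * |ξ| + 2 * M / δ := by field_simp; ring
    have h6 : 0 ≤ 2 * M / δ := by positivity
    have h7 : 0 ≤ δ / 2 * |ξ| := by positivity
    linarith
  have hB : Real.pi * ‖y‖ / ‖Complex.sin (Real.pi * y)‖ ≤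
      2 * M / δ * Real.exp (-(δ * |ξ|)) := by
    have h1 : Real.pi * ‖y‖ / ‖Complex.sin (Real.pi * y)‖ ≤
        Real.pi * ‖y‖ / (u * Real.exp (u / 2) / 2) :=
      div_le_div_of_nonneg_left (by positivity) (by positivity) hsin
    have h2 : Real.pi * ‖y‖ / (u * Real.exp (u / 2) / 2) =
        2 * (‖y‖ / |y.im|) * Real.exp (-(u / 2)) := by
      rw [hu, Real.exp_neg]
      have := Real.pi_pos.ne'
      field_simp
    have h3 : ‖y‖ / |y.im| ≤ M / δ := by
      rw [div_le_div_iff₀ him hδ]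
      nlinarith [mul_le_mul_of_nonneg_right hy hδ.le, mul_le_mul_of_nonneg_left hyi hM]
    have h4 : Real.exp (-(u / 2)) ≤ Real.exp (-(δ * |ξ|)) := by
      refine Real.exp_le_exp.2 ?_
      nlinarith
    rw [h2] at h1
    refine h1.trans ?_
    rw [mul_div_assoc 2 M δ]
    exact mul_le_mul (by linarith) h4 (Real.exp_pos _).le (by positivity)
  have h := mul_le_mul hA hB (by positivity) (by positivity)
  refine h.trans ?_
  have e : Real.exp (δ / 2 * |ξ|) * Real.exp (-(δ * |ξ|)) = Real.exp (-(δ / 2 * |ξ|)) := by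
    rw [← Real.exp_add]; congr 1; ring
  have e2 : (1 + 2 * M / δ) * Real.exp (δ / 2 * |ξ|) * (2 * M / δ * Real.exp (-(δ * |ξ|))) =
      (1 + 2 * M / δ) * (2 * M / δ) * Real.exp (-(δ / 2 * |ξ|)) := by
    rw [← e]; ring
  rw [e2]
  nlinarith [Real.exp_pos (-(δ / 2 * |ξ|))]

theorem norm_betaIntegral_le_one {u v : ℂ} (hu : 1 ≤ u.re) (hv : 1 ≤ v.re) :
    ‖Complex.betaIntegral u v‖ ≤ 1 := by
  have h := intervalIntegral.norm_integral_le_of_norm_le_const (a := 0) (b := 1) (C := 1)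
    (f := fun x : ℝ => (x : ℂ) ^ (u - 1) * (1 - (x : ℂ)) ^ (v - 1)) ?_
  · simpa [Complex.betaIntegral] using h
  intro x hx
  rw [uIoc_of_le zero_le_one] at hx
  rw [norm_mul, Complex.norm_cpow_eq_rpow_re_of_pos hx.1]
  have h1 : x ^ (u - 1).re ≤ 1 := Real.rpow_le_one hx.1.le hx.2 (by simpa using hu)
  have h2 : ‖(1 - (x : ℂ)) ^ (v - 1)‖ ≤ 1 := by
    rcases hx.2.eq_or_lt with rfl | hlt
    · simp only [Complex.ofReal_one, sub_self]
      rcases eq_or_ne (v - 1) 0 with h0 | h0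
      · simp [h0]
      · simp [Complex.zero_cpow h0]
    · rw [← Complex.ofReal_one, ← Complex.ofReal_sub,
        Complex.norm_cpow_eq_rpow_re_of_pos (by linarith)]
      exact Real.rpow_le_one (by linarith) (by linarith [hx.1]) (by simpa using hv)
  exact mul_le_one₀ h1 (norm_nonneg _) h2

/-- The Beta integrand has modulus at most `1` when both exponents have real part at least `1`. -/
theorem norm_Gamma_mul_Gamma_le {u v : ℂ} (hu : 1 ≤ u.re) (hv : 1 ≤ v.re) :
    ‖Complex.Gamma u * Complex.Gamma v‖ ≤ ‖Complex.Gamma (u + v)‖ := by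
  rw [Complex.Gamma_mul_Gamma_eq_betaIntegral (by linarith) (by linarith), norm_mul]
  exact mul_le_of_le_one_right (norm_nonneg _) (norm_betaIntegral_le_one hu hv)

/-- `Γ(1+iξ) Γ(1+bξ) Γ(1+cξ)` with `b, c = -i/2 ∓ τ`; the three slopes sum to zero, and
`τ = √3/2` gives `b = iω`, `c = iω²`. -/
noncomputable def gammaFamily (τ : ℂ) (ξ : ℝ) : ℂ :=
  Complex.Gamma (1 + Complex.I * ξ) * Complex.Gamma (1 + (-(Complex.I * ξ / 2) - τ * ξ)) *
    Complex.Gamma (1 + (-(Complex.I * ξ / 2) + τ * ξ))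

theorem gammaFamily_neg (τ : ℂ) (ξ : ℝ) : gammaFamily (-τ) ξ = gammaFamily τ ξ := by
  unfold gammaFamily
  ring_nf

/-- When `Re τ · ξ ≥ 0`, the first and the third argument have real part at least `1`; their product of
Gamma values is bounded by `Γ` at the sum of the arguments, which is the reflected partner
`2 - y` of the second argument `1 + y`. -/
theorem norm_gammaFamily_le_aux {τ : ℂ} {ξ δ T : ℝ} (hδ : 0 < δ) (hτ : |τ.im| ≤ 1 / 2 - δ)
    (hT : ‖τ‖ ≤ T) (h : 0 ≤ τ.re * ξ) :
    ‖gammaFamily τ ξ‖ ≤ (1 + (1 + 2 * (1 / 2 + T) / δ) * (2 * (1 / 2 + T) / δ)) *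
      Real.exp (-(δ / 2 * |ξ|)) := by
  set y : ℂ := -(Complex.I * ξ / 2) - τ * ξ with hy
  have hT0 : 0 ≤ T := (norm_nonneg _).trans hT
  have him : y.im = -((1 / 2 + τ.im) * ξ) := by simp [hy]; ring
  have h1 := norm_Gamma_mul_Gamma_reflect_le (y := y) (M := 1 / 2 + T) (ξ := ξ) hδ (by positivity)
    ?_ ?_
  · refine le_trans ?_ h1
    have e : gammaFamily τ ξ = Complex.Gamma (1 + y) * (Complex.Gamma (1 + Complex.I * ξ) *
        Complex.Gamma (1 + (-(Complex.I * ξ / 2) + τ * ξ))) := by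
      rw [gammaFamily, ← hy]; ring
    rw [e, norm_mul, norm_mul (Complex.Gamma (1 + y))]
    refine mul_le_mul_of_nonneg_left ?_ (norm_nonneg _)
    refine (norm_Gamma_mul_Gamma_le (by simp) (by simpa using h)).trans_eq ?_
    congr 2
    rw [hy]; ring
  · rw [hy]
    refine (norm_sub_le _ _).trans ?_
    rw [norm_neg, norm_div, norm_mul, norm_mul, Complex.norm_I, Complex.norm_real,
      Complex.norm_two, Real.norm_eq_abs]
    nlinarith [abs_nonneg ξ]
  · rw [him, abs_neg, abs_mul]
    refine mul_le_mul_of_nonneg_right ?_ (abs_nonneg _)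
    have := abs_le.1 hτ
    exact le_trans (by linarith) (le_abs_self _)

/-- Exponential decay in `ξ`, locally uniformly for `τ` in the strip. The symmetry `τ ↦ -τ` reduces
to one sign of `Re τ · ξ`. -/
theorem norm_gammaFamily_le {τ : ℂ} {δ T : ℝ} (hδ : 0 < δ) (hτ : |τ.im| ≤ 1 / 2 - δ)
    (hT : ‖τ‖ ≤ T) (ξ : ℝ) :
    ‖gammaFamily τ ξ‖ ≤ (1 + (1 + 2 * (1 / 2 + T) / δ) * (2 * (1 / 2 + T) / δ)) *
      Real.exp (-(δ / 2 * |ξ|)) := by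
  rcases le_total 0 (τ.re * ξ) with h | h
  · exact norm_gammaFamily_le_aux hδ hτ hT h
  · rw [← gammaFamily_neg]
    refine norm_gammaFamily_le_aux hδ ?_ ?_ ?_
    · rwa [Complex.neg_im, abs_neg]
    · rwa [norm_neg]
    · rw [Complex.neg_re, neg_mul]; linarith

/-- The strip `|Im τ| < 1/2`. It is where the imaginary parts `-(1/2 ± Im τ) ξ` of the arguments in
`gammaFamily` keep a fixed sign, so that the poles of `Γ` are avoided. -/
def strip : Set ℂ := {τ | |τ.im| < 1 / 2}

theorem neg_mem_strip {τ : ℂ} (hτ : τ ∈ strip) : -τ ∈ strip := by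
  simpa [strip] using hτ

theorem gammaFamily_arg_ne {τ : ℂ} (hτ : τ ∈ strip) (ξ : ℝ) (m : ℕ) :
    1 + (-(Complex.I * ξ / 2) + τ * ξ) ≠ -m := by
  intro h
  have him := congrArg Complex.im h
  have hre := congrArg Complex.re h
  have hτ' := abs_lt.1 (show |τ.im| < 1 / 2 from hτ)
  have h0 : (τ.im - 1 / 2) * ξ = 0 := by
    simp at him; linarith
  rcases mul_eq_zero.1 h0 with h1 | h1
  · linarith
  · simp [h1] at hre
    have : (0 : ℝ) ≤ m := m.cast_nonneg
    linarith

theorem gammaFamily_arg_ne' {τ : ℂ} (hτ : τ ∈ strip) (ξ : ℝ) (m : ℕ) :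
    1 + (-(Complex.I * ξ / 2) - τ * ξ) ≠ -m := by
  have := gammaFamily_arg_ne (neg_mem_strip hτ) ξ m
  rwa [neg_mul, ← sub_eq_add_neg] at this

theorem one_add_I_mul_ne (ξ : ℝ) (m : ℕ) : 1 + Complex.I * ξ ≠ -m := by
  intro h
  have hre := congrArg Complex.re h
  simp at hre
  have : (0 : ℝ) ≤ m := m.cast_nonneg
  linarith

theorem continuous_gammaFamily {τ : ℂ} (hτ : τ ∈ strip) : Continuous (gammaFamily τ) := by
  refine continuous_iff_continuousAt.2 fun ξ => ?_
  unfold gammaFamily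
  refine ContinuousAt.mul (ContinuousAt.mul ?_ ?_) ?_
  · exact (Complex.differentiableAt_Gamma _ (one_add_I_mul_ne ξ)).continuousAt.comp
      (f := fun ξ : ℝ => 1 + Complex.I * (ξ : ℂ)) (by fun_prop)
  · exact (Complex.differentiableAt_Gamma _ (gammaFamily_arg_ne' hτ ξ)).continuousAt.comp
      (f := fun ξ : ℝ => 1 + (-(Complex.I * (ξ : ℂ) / 2) - τ * ξ)) (by fun_prop)
  · exact (Complex.differentiableAt_Gamma _ (gammaFamily_arg_ne hτ ξ)).continuousAt.comp
      (f := fun ξ : ℝ => 1 + (-(Complex.I * (ξ : ℂ) / 2) + τ * ξ)) (by fun_prop)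

theorem differentiableAt_gammaFamily {τ : ℂ} (hτ : τ ∈ strip) (ξ : ℝ) :
    DifferentiableAt ℂ (fun τ => gammaFamily τ ξ) τ := by
  unfold gammaFamily
  refine DifferentiableAt.mul (DifferentiableAt.mul (by fun_prop) ?_) ?_
  · exact (Complex.differentiableAt_Gamma _ (gammaFamily_arg_ne' hτ ξ)).comp τ
      (f := fun τ : ℂ => 1 + (-(Complex.I * (ξ : ℂ) / 2) - τ * ξ)) (by fun_prop)
  · exact (Complex.differentiableAt_Gamma _ (gammaFamily_arg_ne hτ ξ)).comp τ
      (f := fun τ : ℂ => 1 + (-(Complex.I * (ξ : ℂ) / 2) + τ * ξ)) (by fun_prop)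

theorem strip_ball {τ₀ : ℂ} (hτ₀ : τ₀ ∈ strip) : ∃ δ > 0, δ ≤ 1 / 2 ∧
    ∀ τ ∈ Metric.ball τ₀ δ, |τ.im| ≤ 1 / 2 - δ ∧ ‖τ‖ ≤ ‖τ₀‖ + 1 := by
  have h0 : |τ₀.im| < 1 / 2 := hτ₀
  refine ⟨(1 / 2 - |τ₀.im|) / 2, by linarith, by linarith [abs_nonneg τ₀.im], fun τ hτ => ?_⟩
  rw [Metric.mem_ball, dist_eq_norm] at hτ
  have h1 := Complex.abs_im_le_norm (τ - τ₀)
  have h2 : |τ.im| ≤ |τ₀.im| + |(τ - τ₀).im| := by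
    have := abs_add_le τ₀.im (τ - τ₀).im
    simpa using this
  have h3 : ‖τ‖ ≤ ‖τ₀‖ + ‖τ - τ₀‖ := by
    have := norm_add_le τ₀ (τ - τ₀)
    simpa using this
  exact ⟨by linarith, by linarith [abs_nonneg τ₀.im]⟩

theorem mem_strip_of_le {τ : ℂ} {δ : ℝ} (hδ : 0 < δ) (h : |τ.im| ≤ 1 / 2 - δ) : τ ∈ strip := by
  show |τ.im| < 1 / 2
  linarith

theorem differentiableOn_integral_gammaFamily :
    DifferentiableOn ℂ (fun τ => ∫ ξ, gammaFamily τ ξ) strip := by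
  refine differentiableOn_integral gammaFamily
    (fun ξ τ hτ => (differentiableAt_gammaFamily hτ ξ).differentiableWithinAt)
    (fun τ hτ => (continuous_gammaFamily hτ).aestronglyMeasurable) fun τ₀ hτ₀ => ?_
  obtain ⟨δ, hδ, -, hb⟩ := strip_ball hτ₀
  exact ⟨δ, hδ, _, (integrable_exp_neg_mul_abs (half_pos hδ)).const_mul _, fun τ hτ =>
    ⟨mem_strip_of_le hδ (hb τ hτ).1, norm_gammaFamily_le hδ (hb τ hτ).1 (hb τ hτ).2⟩⟩

/-- `E` is the modulus of `2 e^{2iτξ} cosh ξ`, which grows exponentially and stays away from `1` on the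
strip. -/
theorem slice_den_bound {τ : ℂ} {δ : ℝ} (hδ : 0 < δ) (hδ' : δ ≤ 1 / 2) (hτ : |τ.im| ≤ 1 / 2 - δ)
    (ξ : ℝ) : ∃ E : ℝ, Real.exp (2 * δ * |ξ|) ≤ E ∧ 1 + δ ≤ E ∧
      E - 1 ≤ ‖1 + 2 * Complex.exp (2 * τ * Complex.I * ξ) * Complex.cosh ξ‖ ∧
      ‖Complex.exp (4 * τ * Complex.I * ξ)‖ ≤ E ^ 2 := by
  have hre : (2 * τ * Complex.I * ξ).re = -(2 * τ.im * ξ) := by simp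
  have hre4 : (4 * τ * Complex.I * ξ).re = -(2 * τ.im * ξ) + -(2 * τ.im * ξ) := by simp; ring
  have hs := abs_le.1 hτ
  have hE : ‖2 * Complex.exp (2 * τ * Complex.I * ξ) * Complex.cosh ξ‖ =
      2 * Real.exp (-(2 * τ.im * ξ)) * Real.cosh ξ := by
    rw [norm_mul, norm_mul, Complex.norm_two, Complex.norm_exp, hre, ← Complex.ofReal_cosh,
      Complex.norm_real, Real.norm_of_nonneg (Real.cosh_pos ξ).le]
  have hE2 : 2 * Real.exp (-(2 * τ.im * ξ)) * Real.cosh ξ =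
      Real.exp ((1 - 2 * τ.im) * ξ) + Real.exp (-((1 + 2 * τ.im) * ξ)) := by
    rw [Real.cosh_eq]
    have e1 : Real.exp ((1 - 2 * τ.im) * ξ) = Real.exp (-(2 * τ.im * ξ)) * Real.exp ξ := by
      rw [← Real.exp_add]; congr 1; ring
    have e2 : Real.exp (-((1 + 2 * τ.im) * ξ)) = Real.exp (-(2 * τ.im * ξ)) * Real.exp (-ξ) := by
      rw [← Real.exp_add]; congr 1; ring
    rw [e1, e2]; ring
  have hge : Real.exp (2 * δ * |ξ|) + Real.exp (-(2 * |ξ|)) ≤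
      2 * Real.exp (-(2 * τ.im * ξ)) * Real.cosh ξ := by
    rw [hE2]
    rcases abs_cases ξ with ⟨h, h0⟩ | ⟨h, h0⟩ <;> rw [h]
    · exact add_le_add (Real.exp_le_exp.2 (by nlinarith)) (Real.exp_le_exp.2 (by nlinarith))
    · rw [add_comm (Real.exp ((1 - 2 * τ.im) * ξ))]
      exact add_le_add (Real.exp_le_exp.2 (by nlinarith)) (Real.exp_le_exp.2 (by nlinarith))
  refine ⟨2 * Real.exp (-(2 * τ.im * ξ)) * Real.cosh ξ, ?_, ?_, ?_, ?_⟩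
  · linarith [Real.exp_pos (-(2 * |ξ|))]
  · have h1 := Real.add_one_le_exp (2 * δ * |ξ|)
    have h2 := Real.add_one_le_exp (-(2 * |ξ|))
    have h3 := Real.exp_pos (-(2 * |ξ|))
    nlinarith [abs_nonneg ξ]
  · rw [← hE, add_comm]
    have := norm_sub_norm_le (2 * Complex.exp (2 * τ * Complex.I * ξ) * Complex.cosh ξ) (-1)
    rwa [sub_neg_eq_add, norm_neg, norm_one] at this
  · rw [Complex.norm_exp, hre4, Real.exp_add, ← sq]
    refine pow_le_pow_left₀ (Real.exp_pos _).le ?_ 2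
    nlinarith [Real.one_le_cosh ξ, Real.exp_pos (-(2 * τ.im * ξ))]

theorem slice_den_ne {τ : ℂ} (hτ : τ ∈ strip) (ξ : ℝ) :
    1 + 2 * Complex.exp (2 * τ * Complex.I * ξ) * Complex.cosh ξ ≠ 0 := by
  intro h
  obtain ⟨δ, hδ, hδ', hb⟩ := strip_ball hτ
  obtain ⟨E, -, h1, h2, -⟩ := slice_den_bound hδ hδ' (hb τ (Metric.mem_ball_self hδ)).1 ξ
  rw [h, norm_zero] at h2
  linarith

theorem norm_sliceIntegrand_le {τ : ℂ} {δ : ℝ} (hδ : 0 < δ) (hδ' : δ ≤ 1 / 2)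
    (hτ : |τ.im| ≤ 1 / 2 - δ) (ξ : ℝ) :
    ‖sliceIntegrand τ ξ‖ ≤ 8 / δ ^ 3 * Real.exp (-(2 * δ * |ξ|)) := by
  obtain ⟨E, h1, h2, h3, h4⟩ := slice_den_bound hδ hδ' hτ ξ
  have hE : 0 < E := by linarith
  rw [sliceIntegrand, norm_div, norm_pow]
  have h5 : δ / 2 * E ≤ E - 1 := by nlinarith
  have h6 := pow_le_pow_left₀ (by positivity) (h5.trans h3) 3
  refine (div_le_div₀ (by positivity) h4 (by positivity) h6).trans ?_
  have h7 : E ^ 2 / (δ / 2 * E) ^ 3 = 8 / δ ^ 3 * E⁻¹ := by field_simp; norm_num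
  rw [h7, Real.exp_neg]
  exact mul_le_mul_of_nonneg_left (inv_anti₀ (Real.exp_pos _) h1) (by positivity)

theorem differentiableOn_integral_sliceIntegrand :
    DifferentiableOn ℂ (fun τ => ∫ ξ, sliceIntegrand τ ξ) strip := by
  refine differentiableOn_integral sliceIntegrand
    (fun ξ τ hτ => DifferentiableAt.differentiableWithinAt ?_)
    (fun τ hτ => Continuous.aestronglyMeasurable ?_) fun τ₀ hτ₀ => ?_
  · unfold sliceIntegrand
    exact DifferentiableAt.div (by fun_prop) (by fun_prop) (pow_ne_zero 3 (slice_den_ne hτ ξ))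
  · unfold sliceIntegrand
    exact Continuous.div (by fun_prop) (by fun_prop) fun ξ => pow_ne_zero 3 (slice_den_ne hτ ξ)
  obtain ⟨δ, hδ, hδ', hb⟩ := strip_ball hτ₀
  refine ⟨δ, hδ, _, (integrable_exp_neg_mul_abs (mul_pos two_pos hδ)).const_mul (8 / δ ^ 3),
    fun τ hτ => ⟨mem_strip_of_le hδ (hb τ hτ).1, norm_sliceIntegrand_le hδ hδ' (hb τ hτ).1⟩⟩

/-! ### Fourier inversion on the imaginary axis and the identity theorem -/

/-- `log (2 cosh x)`, the logarithm of `e^x + e^{-x}`. -/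
noncomputable def logTwoCosh (x : ℝ) : ℝ := Real.log (2 * Real.cosh x)

theorem exp_logTwoCosh (x : ℝ) : Real.exp (logTwoCosh x) = 2 * Real.cosh x :=
  Real.exp_log (by positivity)

theorem cexp_logTwoCosh (x : ℝ) : Complex.exp (logTwoCosh x) = 2 * Complex.cosh x := by
  rw [← Complex.ofReal_exp, exp_logTwoCosh]; push_cast; rfl

theorem logTwoCosh_neg (x : ℝ) : logTwoCosh (-x) = logTwoCosh x := by
  rw [logTwoCosh, Real.cosh_neg, logTwoCosh]

theorem continuous_logTwoCosh : Continuous logTwoCosh :=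
  Continuous.log (by fun_prop) fun x => by positivity

theorem abs_le_logTwoCosh (x : ℝ) : |x| ≤ logTwoCosh x := by
  rw [logTwoCosh, Real.le_log_iff_exp_le (by positivity), ← Real.cosh_abs, Real.cosh_eq]
  linarith [Real.exp_pos (-|x|)]

theorem sigmoid_two_mul (x : ℝ) : Real.sigmoid (2 * x) = Real.exp (x - logTwoCosh x) := by
  rw [Real.exp_sub, exp_logTwoCosh, Real.sigmoid_def, Real.cosh_eq]
  have h : Real.exp (-(2 * x)) = Real.exp (-x) / Real.exp x := by
    rw [← Real.exp_sub]; congr 1; ring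
  rw [h]
  have := Real.exp_pos x
  have := Real.exp_pos (-x)
  field_simp

theorem one_sub_sigmoid_two_mul (x : ℝ) :
    1 - Real.sigmoid (2 * x) = Real.exp (-x - logTwoCosh x) := by
  rw [← Real.sigmoid_neg, ← mul_neg, sigmoid_two_mul, logTwoCosh_neg]

theorem ofReal_exp_cpow (r : ℝ) (w : ℂ) : ((Real.exp r : ℝ) : ℂ) ^ w = Complex.exp (r * w) := by
  rw [Complex.cpow_def_of_ne_zero (by exact_mod_cast (Real.exp_pos r).ne'),
    ← Complex.ofReal_log (Real.exp_pos r).le, Real.log_exp]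

/-- The substitution `t = e^x / (e^x + e^{-x})` turns the Beta integral into a Fourier type integral over
the line. -/
theorem betaIntegral_eq_integral (u v : ℂ) :
    Complex.betaIntegral u v =
      2 * ∫ x : ℝ, Complex.exp ((u - v) * x - (u + v) * logTwoCosh x) := by
  have him : (fun x : ℝ => Real.sigmoid (2 * x)) '' univ = Ioo 0 1 := by
    rw [image_univ, ← Real.range_sigmoid]
    exact (mul_left_surjective₀ (two_ne_zero' ℝ)).range_comp Real.sigmoid
  have h := integral_image_eq_integral_abs_deriv_smul (s := univ)
    (f := fun x : ℝ => Real.sigmoid (2 * x))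
    (f' := fun x => Real.sigmoid (2 * x) * (1 - Real.sigmoid (2 * x)) * 2) MeasurableSet.univ
    (fun x _ => ?_) (fun x _ y _ hxy => ?_)
    (fun x : ℝ => (x : ℂ) ^ (u - 1) * (1 - (x : ℂ)) ^ (v - 1))
  · rw [Complex.betaIntegral, intervalIntegral.integral_of_le zero_le_one,
      integral_Ioc_eq_integral_Ioo, ← him, h, setIntegral_univ, ← integral_const_mul]
    congr 1
    funext x
    have h1 : (1 : ℂ) - ((Real.sigmoid (2 * x) : ℝ) : ℂ) =
        ((Real.exp (-x - logTwoCosh x) : ℝ) : ℂ) := by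
      rw [← one_sub_sigmoid_two_mul]; push_cast; rfl
    simp only [h1]
    rw [one_sub_sigmoid_two_mul, sigmoid_two_mul, ofReal_exp_cpow, ofReal_exp_cpow,
      abs_of_pos (by positivity), Complex.real_smul]
    push_cast
    rw [mul_comm _ (2 : ℂ), mul_assoc, ← Complex.exp_add, ← Complex.exp_add, ← Complex.exp_add]
    congr 2
    ring
  · have := (Real.hasDerivAt_sigmoid (2 * x)).comp x ((hasDerivAt_id x).const_mul 2)
    simp only [mul_one] at this
    exact this.hasDerivWithinAt
  · have := Real.sigmoid_injective hxy
    linarith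

/-- The factor `Γ(1+iξ) Γ(2-iξ)` of `gammaFamily` after the Beta integral is split off. -/
noncomputable def gammaPair (ξ : ℝ) : ℂ :=
  Complex.Gamma (1 + Complex.I * ξ) * Complex.Gamma (2 - Complex.I * ξ)

/-- The function `4 e^{-x} / (2 cosh x)³`, whose Fourier transform is `gammaPair` up to scaling. -/
noncomputable def pairDensity (x : ℝ) : ℂ := 4 * Complex.exp (-x - 3 * logTwoCosh x)

theorem continuous_pairDensity : Continuous pairDensity := by
  have := continuous_logTwoCosh
  unfold pairDensity
  fun_prop

theorem integrable_pairDensity : Integrable pairDensity := by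
  refine ((integrable_exp_neg_mul_abs two_pos).const_mul 4).mono'
    continuous_pairDensity.aestronglyMeasurable (Eventually.of_forall fun x => ?_)
  have e : (-(x : ℂ) - 3 * logTwoCosh x).re = -x - 3 * logTwoCosh x := by simp
  rw [pairDensity, norm_mul, Complex.norm_exp, e]
  simp only [Complex.norm_ofNat]
  refine mul_le_mul_of_nonneg_left (Real.exp_le_exp.2 ?_) (by norm_num)
  linarith [abs_le_logTwoCosh x, neg_abs_le x]

theorem gammaPair_eq_integral (ξ : ℝ) :
    gammaPair ξ = ∫ x : ℝ, Complex.exp (2 * Complex.I * ξ * x) * pairDensity x := by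
  have h3 : Complex.Gamma 3 = 2 := by
    have := Complex.Gamma_nat_eq_factorial 2
    norm_num at this
    simp
  rw [gammaPair, Complex.Gamma_mul_Gamma_eq_betaIntegral (by simp) (by simp),
    betaIntegral_eq_integral]
  have e : (1 + Complex.I * ξ) + (2 - Complex.I * ξ) = (3 : ℂ) := by ring
  rw [e, h3, ← mul_assoc, ← integral_const_mul]
  congr 1
  funext x
  rw [pairDensity, mul_left_comm, ← Complex.exp_add]
  congr 1
  · norm_num
  · congr 1; ring

theorem continuous_gammaPair : Continuous gammaPair := by
  refine continuous_iff_continuousAt.2 fun ξ => ?_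
  unfold gammaPair
  refine ContinuousAt.mul ?_ ?_
  · exact (Complex.differentiableAt_Gamma _ (one_add_I_mul_ne ξ)).continuousAt.comp
      (f := fun ξ : ℝ => 1 + Complex.I * (ξ : ℂ)) (by fun_prop)
  · refine (Complex.differentiableAt_Gamma _ fun m h => ?_).continuousAt.comp
      (f := fun ξ : ℝ => 2 - Complex.I * (ξ : ℂ)) (by fun_prop)
    have hre := congrArg Complex.re h
    simp at hre
    have : (0 : ℝ) ≤ m := m.cast_nonneg
    linarith

theorem integrable_gammaPair : Integrable gammaPair := by
  refine ((integrable_exp_neg_mul_abs (half_pos one_pos)).const_mul _).mono'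
    continuous_gammaPair.aestronglyMeasurable (Eventually.of_forall fun ξ =>
      norm_Gamma_mul_Gamma_reflect_le (M := 1) one_pos zero_le_one ?_ ?_)
  · simp
  · simp

/-- Fourier inversion for `pairDensity` at the point `-l/2`. -/
theorem integral_gammaPair_mul_exp (l : ℝ) :
    ∫ ξ : ℝ, gammaPair ξ * Complex.exp (Complex.I * ξ * l) =
      4 * Real.pi * Complex.exp (2 * l) / (1 + Complex.exp l) ^ 3 := by
  have hpi : (Real.pi : ℂ) ≠ 0 := by exact_mod_cast Real.pi_ne_zero
  have hF : FourierTransform.fourier pairDensity = fun w : ℝ => gammaPair (-Real.pi * w) := by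
    funext w
    rw [Real.fourier_real_eq_integral_exp_smul, gammaPair_eq_integral]
    congr 1
    funext x
    rw [smul_eq_mul]
    congr 2
    push_cast
    ring
  have hI : Integrable (FourierTransform.fourier pairDensity) := by
    rw [hF]
    exact integrable_gammaPair.comp_mul_left' (neg_ne_zero.2 Real.pi_ne_zero)
  have h := congrFun (continuous_pairDensity.fourierInv_fourier_eq integrable_pairDensity hI)
    (-l / 2)
  rw [Real.fourierInv_eq', hF] at h
  have h2 := Measure.integral_comp_mul_left
    (fun ξ : ℝ => gammaPair ξ * Complex.exp (Complex.I * ξ * l)) (-Real.pi)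
  have h3 : ∫ v : ℝ, Complex.exp (↑(2 * Real.pi * inner ℝ v (-l / 2)) * Complex.I) •
        gammaPair (-Real.pi * v) =
      ∫ v : ℝ, gammaPair (-Real.pi * v) * Complex.exp (Complex.I * ↑(-Real.pi * v) * l) := by
    congr 1
    funext v
    rw [smul_eq_mul, mul_comm]
    congr 2
    simp only [RCLike.inner_apply, conj_trivial]
    push_cast
    ring
  rw [h3, h2, abs_inv, abs_neg, abs_of_pos Real.pi_pos, Complex.real_smul] at h
  push_cast at h
  rw [inv_mul_eq_iff_eq_mul₀ hpi] at h
  rw [h, pairDensity]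
  have e1 : Complex.exp (-((-l / 2 : ℝ) : ℂ) - 3 * logTwoCosh (-l / 2)) =
      Complex.exp (l / 2) / (Complex.exp (l / 2) + Complex.exp (-(l / 2))) ^ 3 := by
    rw [Complex.exp_sub]
    have h3 : (3 : ℂ) * logTwoCosh (-l / 2) = ((3 : ℕ) : ℂ) * logTwoCosh (l / 2) := by
      rw [neg_div, logTwoCosh_neg]; norm_num
    rw [h3, Complex.exp_nat_mul, cexp_logTwoCosh, Complex.two_cosh]
    push_cast
    congr 2
    ring
  have hne : Complex.exp (l / 2) + Complex.exp (-(l / 2)) ≠ 0 := by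
    have : ((Real.exp (l / 2) + Real.exp (-(l / 2)) : ℝ) : ℂ) ≠ 0 := by
      exact_mod_cast (by positivity : Real.exp (l / 2) + Real.exp (-(l / 2)) ≠ 0)
    simpa using this
  have hne1 : 1 + Complex.exp l ≠ 0 := by
    have : ((1 + Real.exp l : ℝ) : ℂ) ≠ 0 := by
      exact_mod_cast (by positivity : 1 + Real.exp l ≠ 0)
    simpa using this
  have e2 : 1 + Complex.exp l =
      Complex.exp (l / 2) * (Complex.exp (l / 2) + Complex.exp (-(l / 2))) := by
    rw [mul_add, ← Complex.exp_add, ← Complex.exp_add, add_halves, add_neg_cancel,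
      Complex.exp_zero, add_comm]
  have e3 : Complex.exp (2 * l) = Complex.exp (l / 2) ^ 4 := by
    rw [← Complex.exp_nat_mul]; congr 1; push_cast; ring
  rw [e1, e2, e3]
  have := Complex.exp_ne_zero (l / 2)
  field_simp

/-- For `τ = is` the exponents of the Beta integral of `gammaFamily` are purely oscillatory in `ξ`.
After Fubini the `ξ`-integral is `integral_gammaPair_mul_exp` at `l = log (2 cosh x) - 2sx`. -/
theorem integral_gammaFamily_slice (s : ℝ) :
    ∫ ξ, gammaFamily (Complex.I * s) ξ = 8 * Real.pi * ∫ ξ, sliceIntegrand (Complex.I * s) ξ := by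
  have hc := continuous_logTwoCosh
  have h1 (ξ : ℝ) : gammaFamily (Complex.I * s) ξ = 2 * ∫ x : ℝ, gammaPair ξ *
      Complex.exp (-2 * logTwoCosh x) *
        Complex.exp (Complex.I * ξ * (logTwoCosh x - 2 * s * x : ℝ)) := by
    rw [gammaFamily, mul_assoc, Complex.Gamma_mul_Gamma_eq_betaIntegral (by simp) (by simp),
      betaIntegral_eq_integral]
    have e : (1 + (-(Complex.I * ξ / 2) - Complex.I * s * ξ)) +
        (1 + (-(Complex.I * ξ / 2) + Complex.I * s * ξ)) = 2 - Complex.I * ξ := by ring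
    rw [e, ← mul_assoc, ← gammaPair, mul_left_comm, ← integral_const_mul]
    congr 2
    funext x
    rw [mul_assoc (gammaPair ξ), ← Complex.exp_add]
    congr 2
    push_cast
    ring
  have hint : Integrable (Function.uncurry fun ξ x : ℝ => gammaPair ξ *
      Complex.exp (-2 * logTwoCosh x) *
        Complex.exp (Complex.I * ξ * (logTwoCosh x - 2 * s * x : ℝ)))
      (volume.prod volume) := by
    have hg : Integrable fun x : ℝ => Complex.exp (-2 * logTwoCosh x) := by
      refine (integrable_exp_neg_mul_abs two_pos).mono'
        (Continuous.aestronglyMeasurable (by fun_prop)) (Eventually.of_forall fun x => ?_)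
      have e : (-2 * (logTwoCosh x : ℂ)).re = -2 * logTwoCosh x := by simp
      rw [Complex.norm_exp, e]
      exact Real.exp_le_exp.2 (by linarith [abs_le_logTwoCosh x])
    have hG := continuous_gammaPair
    refine (integrable_gammaPair.mul_prod hg).mono
      (Continuous.aestronglyMeasurable ?_) (Eventually.of_forall fun p => ?_)
    · unfold Function.uncurry
      fun_prop
    · have e : (Complex.I * p.1 * (logTwoCosh p.2 - 2 * s * p.2 : ℝ)).re = 0 := by simp
      rw [Function.uncurry, norm_mul, Complex.norm_exp (Complex.I * _ * _), e, Real.exp_zero,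
        mul_one]
  simp_rw [h1]
  rw [integral_const_mul, integral_integral_swap hint, ← integral_const_mul,
    ← integral_const_mul]
  congr 1
  funext x
  have h2 : ∫ ξ : ℝ, gammaPair ξ * Complex.exp (-2 * logTwoCosh x) *
        Complex.exp (Complex.I * ξ * (logTwoCosh x - 2 * s * x : ℝ)) =
      Complex.exp (-2 * logTwoCosh x) * (4 * Real.pi * Complex.exp
        (2 * (logTwoCosh x - 2 * s * x : ℝ)) /
          (1 + Complex.exp (logTwoCosh x - 2 * s * x : ℝ)) ^ 3) := by
    rw [← integral_gammaPair_mul_exp, ← integral_const_mul]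
    congr 1
    funext ξ
    ring
  rw [h2, sliceIntegrand]
  have e1 : Complex.exp ((logTwoCosh x - 2 * s * x : ℝ) : ℂ) =
      2 * Complex.exp (2 * (Complex.I * s) * Complex.I * x) * Complex.cosh x := by
    rw [mul_right_comm (2 : ℂ), ← cexp_logTwoCosh, ← Complex.exp_add]
    congr 1
    push_cast
    linear_combination (-2 * s * x : ℂ) * Complex.I_sq
  have e2 : Complex.exp (-2 * logTwoCosh x) * Complex.exp (2 * (logTwoCosh x - 2 * s * x : ℝ)) =
      Complex.exp (4 * (Complex.I * s) * Complex.I * x) := by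
    rw [← Complex.exp_add]
    congr 1
    push_cast
    linear_combination (-4 * s * x : ℂ) * Complex.I_sq
  rw [e1, ← e2]
  ring

theorem isOpen_strip : IsOpen strip :=
  isOpen_lt (by fun_prop) continuous_const

theorem isPreconnected_strip : IsPreconnected strip := by
  have : strip = Complex.imLm ⁻¹' Ioo (-(1 / 2)) (1 / 2) := by
    ext τ
    simp [strip, abs_lt]
  rw [this]
  exact ((convex_Ioo _ _).linear_preimage Complex.imLm).isPreconnected

theorem integral_gammaFamily_eq {τ : ℂ} (hτ : τ ∈ strip) :
    ∫ ξ, gammaFamily τ ξ = 8 * Real.pi * ∫ ξ, sliceIntegrand τ ξ := by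
  have hf := differentiableOn_integral_gammaFamily.analyticOnNhd isOpen_strip
  have hg := (differentiableOn_integral_sliceIntegrand.const_mul
    (8 * (Real.pi : ℂ))).analyticOnNhd isOpen_strip
  refine hf.eqOn_of_preconnected_of_frequently_eq hg isPreconnected_strip (z₀ := 0)
    (by simp [strip]) ?_ hτ
  have ht : Tendsto (fun s : ℝ => Complex.I * (s : ℂ)) (𝓝[≠] 0) (𝓝[≠] 0) := by
    refine tendsto_nhdsWithin_iff.2 ⟨?_, ?_⟩
    · have : Continuous fun s : ℝ => Complex.I * (s : ℂ) := by fun_prop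
      simpa using (this.tendsto 0).mono_left nhdsWithin_le_nhds
    · filter_upwards [self_mem_nhdsWithin] with s hs
      simpa using hs
  exact ht.frequently (Eventually.of_forall integral_gammaFamily_slice).frequently

/-- The arguments of the Gamma functions at `τ = √3/2` are `1 + ω^k iξ`. -/
theorem gammaFamily_end (ξ : ℝ) :
    gammaFamily (Real.sqrt 3 / 2 : ℝ) ξ = tripleGamma (Complex.I * ξ) := by
  have h1 : om * (Complex.I * ξ) = -(Complex.I * ξ / 2) - (Real.sqrt 3 / 2 : ℝ) * ξ := by
    rw [om]; push_cast
    linear_combination (Real.sqrt 3 / 2 * ξ : ℂ) * Complex.I_sq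
  have h2 : om ^ 2 * (Complex.I * ξ) = -(Complex.I * ξ / 2) + (Real.sqrt 3 / 2 : ℝ) * ξ := by
    rw [om_sq]
    linear_combination -h1
  rw [tripleGamma, gammaFamily, h1, h2]

end Helpers

/-- `∫₀^∞ dx / ∏_{k=1}^∞ (1 + x³/k³)
  = 8π ∫₀^∞ e^{√3 x} / (2 cos x + e^{√3 x})³ dx`. -/
theorem stmt_12 :
    ∫ x in Set.Ioi (0 : ℝ), (∏' k : ℕ, (1 + x ^ 3 / ((k : ℝ) + 1) ^ 3))⁻¹
      = 8 * Real.pi * ∫ x in Set.Ioi (0 : ℝ),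
          Real.exp (Real.sqrt 3 * x) / (2 * Real.cos x + Real.exp (Real.sqrt 3 * x)) ^ 3 := by
  have h := integral_gammaFamily_eq (τ := (Real.sqrt 3 / 2 : ℝ))
    (by simp [strip])
  rw [integral_sliceIntegrand_end, funext gammaFamily_end, integral_tripleGamma_imag,
    mul_left_comm] at h
  have h3 : ((Real.sqrt 3 : ℝ) : ℂ) ≠ 0 := by
    exact_mod_cast (Real.sqrt_pos.2 three_pos).ne'
  have h4 := mul_left_cancel₀ h3 h
  exact_mod_cast h4
end

section
/- There exists $\varepsilon > 0$ such that for every complex number $a$ with $|a| < \varepsilon$: $\int_{-\infty}^{\infty} \frac{dx}{\left(e^{x} + e^{-x} + e^{a + i\sqrt{3}x}\right)^{2}} + \int_{-\infty}^{\infty} \frac{e^{a}\, dx}{\left(e^{a + x} + e^{-x} + e^{i\sqrt{3}x}\right)^{2}} + \int_{-\infty}^{\infty} \frac{e^{a}\, dx}{\left(e^{a + x} + e^{-x} + e^{-i\sqrt{3}x}\right)^{2}} = 1$. -/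
/-!
Let `A`, `B`, `C` be the three exponentials in a denominator, suitably normalised; their exponents
are the vertices of an equilateral triangle. The three integrands are, up to rotation, `AB / F²`,
`BC / F²`, `CA / F²` with `F = A + B + C`, and since
`A / F` has derivative `((α₁ - α₂) AB + (α₁ - α₃) AC) / F²`, they differ by exact terms after weighting with
cube roots of unity.

Concretely, each integral is folded into two half-line integrals
`∫₀^∞ β e^{-2x} / (1 + β e^{-2x} + γ e^{-2cx})² dx` with `c = e^{± iπ/3}` (`integral_eq_halfInt`).
The resulting six are matched in pairs `(e^{-iπ/3}, β, γ)`, `(e^{iπ/3}, γ, β)`. In the first member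
of a pair the ray of integration can be rotated by `π / 3` (`integral_ray_rotate`, which is
Cauchy's theorem on a rectangle in logarithmic coordinates), because for `β`, `γ` near `1` the
denominator has real part at least `1 / 50` on the whole sector (`norm_den`). After rotation the
two integrands add up to an exact derivative, so the pair contributes `(β + γ) / (2 (1 + β + γ))`
(`halfInt_add_halfInt`). With `(β, γ) = (1, eᵃ), (eᵃ, 1), (e⁻ᵃ, e⁻ᵃ)` the three contributions
sum to `1`.
-/

open Complex MeasureTheory Set Filter Topology

/-! ### Rotating a ray of integration -/

/-- The closed sector `0 ≤ arg z ≤ π / 3`, in Cartesian coordinates. -/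
def Sector (z : ℂ) : Prop := 0 ≤ z.im ∧ z.im ≤ √3 * z.re

lemma Sector.norm_le {z : ℂ} (hz : Sector z) : ‖z‖ ≤ 2 * z.re := by
  obtain ⟨h0, h1⟩ := hz
  have h3 : √3 * √3 = 3 := Real.mul_self_sqrt (by norm_num)
  have hp : 0 < √3 := by positivity
  have hre : 0 ≤ z.re := by
    by_contra! h
    nlinarith
  rw [Complex.norm_eq_sqrt_sq_add_sq]
  apply Real.sqrt_le_iff.2 ⟨by linarith, ?_⟩
  have : z.im ^ 2 ≤ (√3 * z.re) ^ 2 := pow_le_pow_left₀ h0 h1 2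
  nlinarith

lemma sector_exp {z : ℂ} (h0 : 0 ≤ z.im) (h1 : z.im ≤ Real.pi / 3) : Sector (exp z) := by
  have h3 : √3 * √3 = 3 := Real.mul_self_sqrt (by norm_num)
  have hs : 0 ≤ Real.sin (Real.pi / 3 - z.im) :=
    Real.sin_nonneg_of_nonneg_of_le_pi (by linarith) (by linarith [Real.pi_pos])
  rw [Real.sin_sub, Real.sin_pi_div_three, Real.cos_pi_div_three] at hs
  have hs' : 0 ≤ Real.sin z.im :=
    Real.sin_nonneg_of_nonneg_of_le_pi h0 (by linarith [Real.pi_pos])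
  have he := Real.exp_pos z.re
  refine ⟨?_, ?_⟩
  · rw [exp_im]; positivity
  · rw [exp_im, exp_re]
    nlinarith

/-- The primitive sixth root of unity `exp (π i / 3)`. -/
noncomputable def ω₆ : ℂ := exp ((Real.pi / 3 : ℝ) * I)

lemma ω₆_eq : ω₆ = 1 / 2 + √3 / 2 * I := by
  rw [ω₆, exp_mul_I, ← ofReal_cos, ← ofReal_sin, Real.cos_pi_div_three, Real.sin_pi_div_three]
  push_cast; ring

lemma ω₆_re : ω₆.re = 1 / 2 := by simp [ω₆_eq]

lemma ω₆_im : ω₆.im = √3 / 2 := by simp [ω₆_eq]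

lemma norm_ω₆ : ‖ω₆‖ = 1 := norm_exp_ofReal_mul_I _

lemma sector_ofReal {r : ℝ} (hr : 0 ≤ r) : Sector r := by
  refine ⟨by simp, ?_⟩
  simp only [ofReal_im, ofReal_re]; positivity

lemma sector_mul_ω₆ {r : ℝ} (hr : 0 ≤ r) : Sector (r * ω₆) := by
  constructor
  · simp only [im_ofReal_mul, ω₆_im]; positivity
  · simp only [im_ofReal_mul, re_ofReal_mul, ω₆_im, ω₆_re]; linarith

lemma integrableOn_of_exp_bound {φ : ℝ → ℂ} (hc : ContinuousOn φ (Ioi 0)) {M : ℝ}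
    (hM : ∀ r > 0, ‖φ r‖ ≤ M * Real.exp (-r)) : IntegrableOn φ (Ioi 0) := by
  refine Integrable.mono' ((integrableOn_exp_neg_Ioi 0).const_mul M)
    (hc.aestronglyMeasurable measurableSet_Ioi) ?_
  exact (ae_restrict_iff' measurableSet_Ioi).2 (Eventually.of_forall hM)

/-- The substitution `r = exp s`, in the form of a limit of symmetric interval integrals. -/
lemma tendsto_integral_comp_exp {φ : ℝ → ℂ} (h : IntegrableOn φ (Ioi 0)) :
    Tendsto (fun n : ℝ => ∫ s in -n..n, φ (Real.exp s) * Real.exp s) atTop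
      (𝓝 (∫ r in Ioi 0, φ r)) := by
  have hd : ∀ x ∈ (univ : Set ℝ), HasDerivWithinAt Real.exp (Real.exp x) univ x :=
    fun x _ => (Real.hasDerivAt_exp x).hasDerivWithinAt
  have him : Real.exp '' univ = Ioi 0 := by rw [image_univ, Real.range_exp]
  have hi := (integrableOn_image_iff_integrableOn_abs_deriv_smul MeasurableSet.univ hd
    Real.exp_injective.injOn φ).1 (him ▸ h)
  have he := integral_image_eq_integral_abs_deriv_smul MeasurableSet.univ hd
    Real.exp_injective.injOn φ
  have hfun : (fun x => |Real.exp x| • φ (Real.exp x)) =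
      fun s => φ (Real.exp s) * Real.exp s := by
    ext s
    rw [abs_of_pos (Real.exp_pos s), real_smul, mul_comm]
  rw [him, hfun, setIntegral_univ] at he
  rw [hfun, integrableOn_univ] at hi
  rw [he]
  exact intervalIntegral_tendsto_integral hi tendsto_neg_atTop_atBot tendsto_id

/-- Rotation of the ray of integration from `arg z = 0` to `arg z = π / 3`, for a function
holomorphic and exponentially small on the sector between the two rays. -/
lemma integral_ray_rotate {f : ℂ → ℂ} (hf : ∀ z, Sector z → DifferentiableAt ℂ f z) {M : ℝ}
    (hM : ∀ z, Sector z → ‖f z‖ ≤ M * Real.exp (-‖z‖)) :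
    ∫ r : ℝ in Ioi 0, f r = ∫ r : ℝ in Ioi 0, f (r * ω₆) * ω₆ := by
  have hM0 : 0 ≤ M := by
    have := (norm_nonneg _).trans (hM 0 (by simpa using sector_ofReal le_rfl))
    simpa using this
  have i1 : IntegrableOn (fun r : ℝ => f r) (Ioi 0) := by
    refine integrableOn_of_exp_bound (M := M) (fun r hr => ?_) (fun r hr => ?_)
    · have := (hf r (sector_ofReal (le_of_lt hr))).continuousAt
      exact (this.comp (f := fun r : ℝ => (r : ℂ)) (by fun_prop)).continuousWithinAt
    · simpa [abs_of_pos hr] using hM r (sector_ofReal hr.le)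
  have i2 : IntegrableOn (fun r : ℝ => f (r * ω₆) * ω₆) (Ioi 0) := by
    refine integrableOn_of_exp_bound (M := M) (fun r hr => ?_) (fun r hr => ?_)
    · have := (hf (r * ω₆) (sector_mul_ω₆ (le_of_lt hr))).continuousAt
      exact ((this.comp (f := fun r : ℝ => (r * ω₆ : ℂ)) (by fun_prop)).mul
        continuousAt_const).continuousWithinAt
    · simpa [abs_of_pos hr, norm_ω₆] using hM (r * ω₆) (sector_mul_ω₆ hr.le)
  -- In the logarithmic coordinate `z = exp ζ` the truncated sector becomes a rectangle.
  let g : ℂ → ℂ := fun ζ => f (exp ζ) * exp ζ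
  have hpi := Real.pi_pos
  have hrect : ∀ n : ℝ, ((∫ s in -n..n, f (Real.exp s : ℝ) * (Real.exp s : ℝ)) -
      ∫ s in -n..n, (f ((Real.exp s : ℝ) * ω₆) * ω₆) * (Real.exp s : ℝ)) =
      I * (∫ y in (0 : ℝ)..Real.pi / 3, g ((-n : ℝ) + y * I)) -
      I * ∫ y in (0 : ℝ)..Real.pi / 3, g (n + y * I) := by
    intro n
    have h := integral_boundary_rect_eq_zero_of_differentiableOn g ⟨-n, 0⟩ ⟨n, Real.pi / 3⟩ ?_
    · simp only [ofReal_zero, zero_mul, add_zero, smul_eq_mul] at h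
      have e1 : ∀ s : ℝ, g s = f (Real.exp s : ℝ) * (Real.exp s : ℝ) := fun s => by simp [g]
      have e2 : ∀ s : ℝ, g (s + (Real.pi / 3 : ℝ) * I) =
          (f ((Real.exp s : ℝ) * ω₆) * ω₆) * (Real.exp s : ℝ) := fun s => by
        simp only [g, exp_add, ω₆, ofReal_exp]; ring
      simp only [e1, e2] at h
      linear_combination h
    · intro ζ hζ
      have him := hζ.2
      simp only [mem_preimage, uIcc_of_le (by positivity : (0 : ℝ) ≤ Real.pi / 3)] at him
      have := hf _ (sector_exp him.1 him.2)
      exact ((this.comp ζ differentiable_exp.differentiableAt).mul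
        differentiable_exp.differentiableAt).differentiableWithinAt
  have hedge : ∀ n : ℝ, ‖∫ y in (0 : ℝ)..Real.pi / 3, g (n + y * I)‖ ≤
      M * (Real.exp n * Real.exp (-Real.exp n)) * (Real.pi / 3) := by
    intro n
    have := intervalIntegral.norm_integral_le_of_norm_le_const (a := 0) (b := Real.pi / 3)
      (f := fun y : ℝ => g (n + y * I)) (C := M * (Real.exp n * Real.exp (-Real.exp n))) ?_
    · rwa [sub_zero, abs_of_pos (by positivity)] at this
    · intro y hy
      rw [uIoc_of_le (by positivity)] at hy
      have hb := hM (exp (n + y * I)) (sector_exp (by simpa using hy.1.le) (by simpa using hy.2))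
      have hn : ‖exp (n + y * I)‖ = Real.exp n := by simp [norm_exp]
      rw [norm_mul, hn]
      rw [hn] at hb
      calc _ ≤ M * Real.exp (-Real.exp n) * Real.exp n := by gcongr
        _ = _ := by ring
  have t1 : Tendsto (fun n : ℝ => ∫ y in (0 : ℝ)..Real.pi / 3, g (n + y * I)) atTop (𝓝 0) := by
    refine squeeze_zero_norm hedge ?_
    have := (Real.tendsto_pow_mul_exp_neg_atTop_nhds_zero 1).comp Real.tendsto_exp_atTop
    simpa [Function.comp_def] using (this.const_mul M).mul_const (Real.pi / 3)
  have t2 : Tendsto (fun n : ℝ => ∫ y in (0 : ℝ)..Real.pi / 3, g ((-n : ℝ) + y * I)) atTop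
      (𝓝 0) := by
    refine squeeze_zero_norm (a := fun n => M * Real.exp (-n) * (Real.pi / 3))
      (fun n => (hedge (-n)).trans ?_) ?_
    · have : Real.exp (-Real.exp (-n)) ≤ 1 := by
        simpa using (Real.exp_pos (-n)).le
      gcongr
      exact mul_le_of_le_one_right (Real.exp_pos _).le this
    · simpa using (Real.tendsto_exp_neg_atTop_nhds_zero.const_mul M).mul_const (Real.pi / 3)
  have hlim := (tendsto_integral_comp_exp i1).sub (tendsto_integral_comp_exp i2)
  rw [funext hrect] at hlim
  have hzero := (t2.const_mul I).sub (t1.const_mul I)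
  simp only [mul_zero, sub_zero] at hzero
  exact sub_eq_zero.1 (tendsto_nhds_unique hlim hzero)

/-! ### Lower bound for the denominator -/

lemma ω₆_mul : (1 - ω₆) * ω₆ = 1 := by
  have h3 : (√3 : ℂ) ^ 2 = 3 := by
    rw [← ofReal_pow, Real.sq_sqrt (by norm_num)]; norm_num
  rw [ω₆_eq]
  linear_combination (-(√3 : ℂ) ^ 2 / 4) * I_sq + h3 / 4

/-- On the sector `|arg u| ≤ π / 3` the real part of `exp (-2 u)` stays well above `-1 / 2`: it
can only be negative when `|2 Im u| > π / 2`, and then `2 Re u > π / (2 √3) > 0.9`. -/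
lemma exp_re_bound {u : ℂ} (h : |u.im| ≤ √3 * u.re) : -(11 / 25) ≤ (exp (-2 * u)).re := by
  have hre : (exp (-2 * u)).re = Real.exp (-2 * u.re) * Real.cos (2 * |u.im|) := by
    rw [exp_re]
    simp only [mul_re, mul_im, neg_re, neg_im, re_ofNat, im_ofNat]
    rw [← Real.cos_abs (2 * |u.im|), ← Real.cos_abs (_ + _)]
    congr 2 <;> simp [abs_mul]
  rw [hre]
  by_cases hq : 2 * |u.im| ≤ Real.pi / 2
  · have := Real.cos_nonneg_of_neg_pi_div_two_le_of_le
      (by linarith [abs_nonneg u.im, Real.pi_pos]) hq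
    have := mul_nonneg (Real.exp_pos (-2 * u.re)).le this
    linarith
  · push Not at hq
    have hs : √3 < 1.733 := by rw [Real.sqrt_lt' (by norm_num)]; norm_num
    have hp := Real.pi_gt_d2
    have hs0 : 0 < √3 := by positivity
    have hx : 0.9 ≤ 2 * u.re := by nlinarith
    have he : Real.exp (-2 * u.re) ≤ 11 / 25 := by
      have h1 := Real.quadratic_le_exp_of_nonneg (x := 0.9) (by norm_num)
      have h2 : (25 / 11 : ℝ) ≤ Real.exp (2 * u.re) :=
        le_trans (le_trans (by norm_num) h1) (Real.exp_le_exp.2 hx)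
      rw [neg_mul, Real.exp_neg]
      exact (inv_le_comm₀ (Real.exp_pos _) (by norm_num)).2 (by rwa [inv_div])
    nlinarith [Real.neg_one_le_cos (2 * |u.im|), Real.exp_pos (-2 * u.re)]

/-- The denominator of the integrands after division by its dominant exponential. -/
noncomputable def den (β γ u v : ℂ) : ℂ := 1 + β * exp (-2 * u) + γ * exp (-2 * v)

lemma mul_exp_re_bound {β u : ℂ} (hβ : ‖β - 1‖ ≤ 1 / 20) (h : |u.im| ≤ √3 * u.re) :
    -(49 / 100) ≤ (β * exp (-2 * u)).re := by
  have h0 : 0 ≤ u.re := by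
    by_contra! h'
    have : 0 < √3 := by positivity
    nlinarith [abs_nonneg u.im]
  have h1 := exp_re_bound h
  have h2 : ‖exp (-2 * u)‖ ≤ 1 := by
    rw [norm_exp]; simpa using h0
  have h3 : ‖(β - 1) * exp (-2 * u)‖ ≤ 1 / 20 := by
    rw [norm_mul]
    nlinarith [norm_nonneg (β - 1), norm_nonneg (exp (-2 * u))]
  have h4 := (abs_le.1 ((abs_re_le_norm _).trans h3)).1
  have h5 : (β * exp (-2 * u)).re = ((β - 1) * exp (-2 * u)).re + (exp (-2 * u)).re := by
    rw [← add_re]; congr 1; ring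
  linarith

/-- By `mul_exp_re_bound` the real part of `den` is at least `1 - 2 * (49 / 100) = 1 / 50`. -/
lemma norm_den {β γ u v : ℂ} (hβ : ‖β - 1‖ ≤ 1 / 20) (hγ : ‖γ - 1‖ ≤ 1 / 20)
    (hu : |u.im| ≤ √3 * u.re) (hv : |v.im| ≤ √3 * v.re) : 1 / 50 ≤ ‖den β γ u v‖ := by
  have h1 := mul_exp_re_bound hβ hu
  have h2 := mul_exp_re_bound hγ hv
  refine le_trans ?_ (re_le_norm _)
  rw [den, add_re, add_re, one_re]
  linarith

lemma den_ne_zero {β γ u v : ℂ} (hβ : ‖β - 1‖ ≤ 1 / 20) (hγ : ‖γ - 1‖ ≤ 1 / 20)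
    (hu : |u.im| ≤ √3 * u.re) (hv : |v.im| ≤ √3 * v.re) : den β γ u v ≠ 0 := by
  have := norm_den hβ hγ hu hv
  intro h
  rw [h, norm_zero] at this
  norm_num at this

lemma norm_div_den_sq_le {β γ u v : ℂ} (hβ : ‖β - 1‖ ≤ 1 / 20) (hγ : ‖γ - 1‖ ≤ 1 / 20)
    (hu : |u.im| ≤ √3 * u.re) (hv : |v.im| ≤ √3 * v.re) {c t : ℂ} (hc : ‖c‖ ≤ 2) {ρ : ℝ}
    (ht : ρ ≤ 2 * t.re) : ‖c * exp (-2 * t) / den β γ u v ^ 2‖ ≤ 5000 * Real.exp (-ρ) := by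
  have h1 := norm_den hβ hγ hu hv
  have h2 : ‖exp (-2 * t)‖ ≤ Real.exp (-ρ) := by
    rw [norm_exp]; apply Real.exp_le_exp.2; simpa using ht
  have h3 : (1 / 50 : ℝ) ^ 2 ≤ ‖den β γ u v‖ ^ 2 := pow_le_pow_left₀ (by norm_num) h1 2
  rw [norm_div, norm_pow, norm_mul, div_le_iff₀ (by positivity)]
  calc ‖c‖ * ‖exp (-2 * t)‖ ≤ 2 * Real.exp (-ρ) := by gcongr
    _ = 5000 * Real.exp (-ρ) * (1 / 50) ^ 2 := by ring
    _ ≤ _ := by gcongr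

lemma norm_le_two {β : ℂ} (hβ : ‖β - 1‖ ≤ 1 / 20) : ‖β‖ ≤ 2 := by
  have := norm_add_le (β - 1) 1
  rw [sub_add_cancel, norm_one] at this
  linarith

lemma Sector.wide {z : ℂ} (hz : Sector z) : |z.im| ≤ √3 * z.re := by
  rw [abs_of_nonneg hz.1]; exact hz.2

lemma Sector.wide_rotate {z : ℂ} (hz : Sector z) :
    |((1 - ω₆) * z).im| ≤ √3 * ((1 - ω₆) * z).re := by
  obtain ⟨h0, h1⟩ := hz
  have h3 : √3 * √3 = 3 := Real.mul_self_sqrt (by norm_num)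
  have hp : 0 < √3 := by positivity
  simp only [mul_im, mul_re, sub_re, sub_im, one_re, one_im, ω₆_re, ω₆_im]
  rw [abs_le]
  constructor <;> nlinarith

/-! ### Half-line integrals -/

/-- The half-line integral `∫₀^∞ β e^{-2x} / (1 + β e^{-2x} + γ e^{-2cx})² dx`; it is used with `c`
one of the two primitive sixth roots of unity. -/
noncomputable def halfInt (c β γ : ℂ) : ℂ :=
  ∫ x : ℝ in Ioi 0, β * exp (-2 * x) / den β γ x (c * x) ^ 2

lemma continuous_den (β γ c d : ℂ) : Continuous fun x : ℝ => den β γ (c * x) (d * x) := by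
  unfold den; fun_prop

lemma wide_ω₆ {x : ℝ} (hx : 0 ≤ x) : |(ω₆ * x).im| ≤ √3 * (ω₆ * x).re := by
  rw [mul_comm]; exact (sector_mul_ω₆ hx).wide

lemma integrableOn_term {β γ c d e b : ℂ} (hβ : ‖β - 1‖ ≤ 1 / 20) (hγ : ‖γ - 1‖ ≤ 1 / 20)
    (hc : ∀ x : ℝ, 0 ≤ x → |(c * x).im| ≤ √3 * (c * x).re)
    (hd : ∀ x : ℝ, 0 ≤ x → |(d * x).im| ≤ √3 * (d * x).re)
    (he : 1 / 2 ≤ e.re) (hb : ‖b‖ ≤ 2) :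
    IntegrableOn (fun x : ℝ => b * exp (-2 * (e * x)) / den β γ (c * x) (d * x) ^ 2) (Ioi 0) := by
  refine integrableOn_of_exp_bound (M := 5000) (fun x hx => ?_) (fun x hx => ?_)
  · have hx' : 0 ≤ x := le_of_lt hx
    have hD := den_ne_zero hβ hγ (hc x hx') (hd x hx')
    refine ContinuousAt.continuousWithinAt (ContinuousAt.div (by fun_prop) ?_ (pow_ne_zero 2 hD))
    exact ((continuous_den β γ c d).pow 2).continuousAt
  · refine norm_div_den_sq_le hβ hγ (hc x hx.le) (hd x hx.le) hb ?_
    rw [re_mul_ofReal]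
    nlinarith

lemma wide_one {x : ℝ} (hx : 0 ≤ x) : |((1 : ℂ) * x).im| ≤ √3 * ((1 : ℂ) * x).re := by
  rw [one_mul]; exact (sector_ofReal hx).wide

lemma integrableOn_halfInt {β γ c : ℂ} (hβ : ‖β - 1‖ ≤ 1 / 20) (hγ : ‖γ - 1‖ ≤ 1 / 20)
    (hc : ∀ x : ℝ, 0 ≤ x → |(c * x).im| ≤ √3 * (c * x).re) :
    IntegrableOn (fun x : ℝ => β * exp (-2 * x) / den β γ x (c * x) ^ 2) (Ioi 0) := by
  have := integrableOn_term hβ hγ (fun _ => wide_one) hc (e := 1) (by norm_num) (norm_le_two hβ)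
  simpa only [one_mul] using this

/-- Rotating the first ray by `π / 3` turns both integrands into rational functions of the same
two exponentials on the positive half-line, and their sum is the derivative of
`1 / (2 (1 + γ e^{-2x} + β e^{-2ω₆x}))`. -/
lemma halfInt_add_halfInt {β γ : ℂ} (hβ : ‖β - 1‖ ≤ 1 / 20) (hγ : ‖γ - 1‖ ≤ 1 / 20) :
    halfInt (1 - ω₆) β γ + halfInt ω₆ γ β = (β + γ) / (2 * (1 + β + γ)) := by
  have hrot : halfInt (1 - ω₆) β γ = ∫ x : ℝ in Ioi 0,
      β * ω₆ * exp (-2 * (ω₆ * x)) / den γ β (1 * x) (ω₆ * x) ^ 2 := by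
    have := integral_ray_rotate
      (f := fun z => β * exp (-2 * z) / den β γ z ((1 - ω₆) * z) ^ 2) (M := 5000)
      (fun z hz => ?_) (fun z hz => ?_)
    · rw [halfInt, this]
      congr 1
      ext x
      have h1 : (1 - ω₆) * (x * ω₆) = x := by linear_combination (x : ℂ) * ω₆_mul
      have h2 : den β γ (x * ω₆) x = den γ β (1 * x) (ω₆ * x) := by
        simp only [den, mul_comm (x : ℂ) ω₆, one_mul]; ring
      rw [h1, h2, mul_comm (x : ℂ) ω₆]
      ring
    · refine DifferentiableAt.div (by fun_prop) ?_
        (pow_ne_zero 2 (den_ne_zero hβ hγ hz.wide hz.wide_rotate))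
      unfold den; fun_prop
    · exact norm_div_den_sq_le hβ hγ hz.wide hz.wide_rotate (norm_le_two hβ) hz.norm_le
  have i1 := integrableOn_term hγ hβ (fun _ => wide_one) (fun _ => wide_ω₆) (e := ω₆)
    (b := β * ω₆) ω₆_re.ge (by rw [norm_mul, norm_ω₆, mul_one]; exact norm_le_two hβ)
  have i2 := integrableOn_halfInt hγ hβ (fun _ => wide_ω₆)
  rw [hrot, halfInt, ← integral_add i1 i2]
  have hden : ∀ x : ℝ, HasDerivAt (fun x : ℝ => den γ β x (ω₆ * x))
      (γ * (exp (-2 * x) * -2) + β * (exp (-2 * (ω₆ * x)) * (-2 * ω₆))) x := by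
    intro x
    have hx : HasDerivAt (fun x : ℝ => (x : ℂ)) 1 x := ofRealCLM.hasDerivAt
    have d1 := ((hx.const_mul (-2)).cexp).const_mul γ
    have d2 := (((hx.const_mul ω₆).const_mul (-2)).cexp).const_mul β
    simp only [mul_one] at d1 d2
    exact (d1.const_add 1).add d2
  have hlim : Tendsto (fun x : ℝ => den γ β x (ω₆ * x)) atTop (𝓝 1) := by
    have key : ∀ e : ℂ, 0 < e.re → Tendsto (fun x : ℝ => exp (-2 * (e * x))) atTop (𝓝 0) := by
      intro e he
      rw [tendsto_exp_nhds_zero_iff]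
      simp only [← mul_assoc, re_mul_ofReal]
      exact tendsto_id.const_mul_atTop_of_neg (by simpa using he)
    have k1 := key 1 (by norm_num)
    have k2 := key ω₆ (by rw [ω₆_re]; norm_num)
    simp only [one_mul] at k1
    simpa [den] using ((k1.const_mul γ).const_add 1).add (k2.const_mul β)
  have := integral_Ioi_of_hasDerivAt_of_tendsto' (a := 0)
    (f := fun x : ℝ => (2 * den γ β x (ω₆ * x))⁻¹) (m := (2 * 1)⁻¹)
    (f' := fun x : ℝ => β * ω₆ * exp (-2 * (ω₆ * x)) / den γ β (1 * x) (ω₆ * x) ^ 2 +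
      γ * exp (-2 * x) / den γ β x (ω₆ * x) ^ 2) (fun x hx => ?_) (i1.add i2)
      ((hlim.const_mul 2).inv₀ (by norm_num))
  · rw [this]
    have h0 := den_ne_zero hγ hβ (wide_one le_rfl) (wide_ω₆ le_rfl)
    simp only [den, ofReal_zero, mul_zero, exp_zero, mul_one] at h0 ⊢
    have h0' : 1 + β + γ ≠ 0 := by convert h0 using 1; ring
    rw [show 1 + γ + β = 1 + β + γ by ring]
    field_simp
    ring
  · have hD := den_ne_zero hγ hβ (wide_one hx) (wide_ω₆ hx)
    rw [one_mul] at hD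
    refine (((hden x).const_mul 2).fun_inv (mul_ne_zero two_ne_zero hD)).congr_deriv ?_
    rw [one_mul]
    field_simp
    ring

/-- Folding an integral over the line into two half-line integrals. -/
lemma integral_eq_halfInt {h : ℝ → ℂ} {β γ β' γ' : ℂ} (hβ : ‖β - 1‖ ≤ 1 / 20)
    (hγ : ‖γ - 1‖ ≤ 1 / 20) (hβ' : ‖β' - 1‖ ≤ 1 / 20) (hγ' : ‖γ' - 1‖ ≤ 1 / 20) {c c' : ℂ}
    (hc : ∀ x : ℝ, 0 ≤ x → |(c * x).im| ≤ √3 * (c * x).re)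
    (hc' : ∀ x : ℝ, 0 ≤ x → |(c' * x).im| ≤ √3 * (c' * x).re)
    (h1 : ∀ x, h x = β * exp (-2 * x) / den β γ x (c * x) ^ 2)
    (h2 : ∀ x, h (-x) = β' * exp (-2 * x) / den β' γ' x (c' * x) ^ 2) :
    ∫ x, h x = halfInt c β γ + halfInt c' β' γ' := by
  have i1 := integrableOn_halfInt hβ hγ hc
  have i2 := integrableOn_halfInt hβ' hγ' hc'
  simp only [← h1] at i1
  simp only [← h2] at i2
  have i3 : IntegrableOn h (Iic 0) := by
    have := integrableOn_Ici_iff_integrableOn_Ioi (by finiteness) |>.2 i2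
    have h3 := (Measure.measurePreserving_neg (volume : Measure ℝ)).integrableOn_comp_preimage
      (Homeomorph.neg ℝ).measurableEmbedding (f := h) (s := Iic 0)
    rw [← h3]
    simpa [Function.comp_def] using this
  rw [← intervalIntegral.integral_Iic_add_Ioi i3 i1, halfInt, halfInt]
  simp only [← h1, ← h2]
  rw [integral_comp_neg_Ioi, neg_zero, add_comm]

lemma two_mul_ω₆ : 2 * ω₆ = 1 + I * √3 := by rw [ω₆_eq]; ring

/-- Division of numerator and denominator by the square of the dominant exponential `exp p`. -/
lemma div_sq_eq {N β γ n p q r b c u v : ℂ} (hN : N = exp n) (hβ : β = exp b) (hγ : γ = exp c)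
    (hn : n = 2 * p + b - 2 * u) (hq : q = p + b - 2 * u) (hr : r = p + c - 2 * v) :
    N / (exp p + exp q + exp r) ^ 2 = β * exp (-2 * u) / den β γ u v ^ 2 := by
  have h1 : N = exp p ^ 2 * (β * exp (-2 * u)) := by
    rw [hN, hβ, ← exp_nat_mul, ← exp_add, ← exp_add, hn]; congr 1; push_cast; ring
  have h2 : exp p + exp q + exp r = exp p * den β γ u v := by
    rw [den, hβ, hγ, mul_add, mul_add, mul_one, ← exp_add, ← exp_add, ← exp_add, ← exp_add, hq, hr]
    congr 3 <;> ring
  rw [h1, h2, mul_pow, mul_div_mul_left _ _ (pow_ne_zero 2 (exp_ne_zero p))]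

/-- There exists `ε > 0` such that for every complex `a` with `|a| < ε`,
`∫_{-∞}^∞ dx/(eˣ + e⁻ˣ + e^{a+i√3x})² + ∫_{-∞}^∞ eᵃ dx/(e^{a+x} + e⁻ˣ + e^{i√3x})²
  + ∫_{-∞}^∞ eᵃ dx/(e^{a+x} + e⁻ˣ + e^{-i√3x})² = 1`. -/
theorem stmt_13 : ∃ ε > (0 : ℝ), ∀ a : ℂ, ‖a‖ < ε →
    (∫ x : ℝ, 1 / (Complex.exp x + Complex.exp (-x) +
        Complex.exp (a + Complex.I * Real.sqrt 3 * x)) ^ 2) +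
    (∫ x : ℝ, Complex.exp a / (Complex.exp (a + x) + Complex.exp (-x) +
        Complex.exp (Complex.I * Real.sqrt 3 * x)) ^ 2) +
    (∫ x : ℝ, Complex.exp a / (Complex.exp (a + x) + Complex.exp (-x) +
        Complex.exp (-(Complex.I * Real.sqrt 3 * x))) ^ 2) = 1 := by
  refine ⟨1 / 40, by norm_num, fun a ha => ?_⟩
  have hw : ∀ x : ℝ, 0 ≤ x → |(ω₆ * x).im| ≤ √3 * (ω₆ * x).re := fun x => wide_ω₆
  have hw' : ∀ x : ℝ, 0 ≤ x → |((1 - ω₆) * x).im| ≤ √3 * ((1 - ω₆) * x).re :=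
    fun x hx => (sector_ofReal hx).wide_rotate
  have h1 : ‖(1 : ℂ) - 1‖ ≤ 1 / 20 := by norm_num
  have hp : ‖exp a - 1‖ ≤ 1 / 20 := by
    linarith [norm_exp_sub_one_le (x := a) (by linarith)]
  have hm : ‖exp (-a) - 1‖ ≤ 1 / 20 := by
    have := norm_exp_sub_one_le (x := -a) (by rw [norm_neg]; linarith)
    rw [norm_neg] at this
    linarith
  have e1 : (∫ x : ℝ, 1 / (exp x + exp (-x) + exp (a + I * √3 * x)) ^ 2) =
      halfInt (1 - ω₆) 1 (exp a) + halfInt ω₆ 1 (exp a) := by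
    refine integral_eq_halfInt h1 hp h1 hp hw' hw (fun x => ?_) (fun x => ?_)
    · refine div_sq_eq (n := 0) (b := 0) (c := a) exp_zero.symm exp_zero.symm rfl ?_ ?_ ?_
      · ring
      · ring
      · linear_combination (-(x : ℂ)) * two_mul_ω₆
    · rw [add_comm (exp _) (exp (-_))]
      refine div_sq_eq (n := 0) (b := 0) (c := a) exp_zero.symm exp_zero.symm rfl ?_ ?_ ?_ <;> push_cast
      · ring
      · ring
      · linear_combination ((x : ℂ)) * two_mul_ω₆
  have e2 : (∫ x : ℝ, exp a / (exp (a + x) + exp (-x) + exp (I * √3 * x)) ^ 2) =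
      halfInt (1 - ω₆) (exp (-a)) (exp (-a)) + halfInt ω₆ (exp a) 1 := by
    refine integral_eq_halfInt hm hm hp h1 hw' hw (fun x => ?_) (fun x => ?_)
    · refine div_sq_eq (n := a) (b := -a) (c := -a) rfl rfl rfl ?_ ?_ ?_
      · ring
      · ring
      · linear_combination (-(x : ℂ)) * two_mul_ω₆
    · rw [add_comm (exp _) (exp (-_))]
      refine div_sq_eq (n := a) (b := a) (c := 0) rfl rfl exp_zero.symm ?_ ?_ ?_ <;> push_cast
      · ring
      · ring
      · linear_combination ((x : ℂ)) * two_mul_ω₆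
  have e3 : (∫ x : ℝ, exp a / (exp (a + x) + exp (-x) + exp (-(I * √3 * x))) ^ 2) =
      halfInt ω₆ (exp (-a)) (exp (-a)) + halfInt (1 - ω₆) (exp a) 1 := by
    refine integral_eq_halfInt hm hm hp h1 hw hw' (fun x => ?_) (fun x => ?_)
    · refine div_sq_eq (n := a) (b := -a) (c := -a) rfl rfl rfl ?_ ?_ ?_
      · ring
      · ring
      · linear_combination ((x : ℂ)) * two_mul_ω₆
    · rw [add_comm (exp _) (exp (-_))]
      refine div_sq_eq (n := a) (b := a) (c := 0) rfl rfl exp_zero.symm ?_ ?_ ?_ <;> push_cast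
      · ring
      · ring
      · linear_combination (-(x : ℂ)) * two_mul_ω₆
  rw [e1, e2, e3]
  have p1 := halfInt_add_halfInt h1 hp
  have p2 := halfInt_add_halfInt hp h1
  have p3 := halfInt_add_halfInt hm hm
  have hne : 2 + exp a ≠ 0 := by
    intro h
    have : exp a - 1 = -3 := by linear_combination h
    rw [this] at hp
    norm_num at hp
  have hfin : (1 + exp a) / (2 * (1 + 1 + exp a)) + (exp a + 1) / (2 * (1 + exp a + 1)) +
      (exp (-a) + exp (-a)) / (2 * (1 + exp (-a) + exp (-a))) = 1 := by
    rw [exp_neg]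
    have h0 := exp_ne_zero a
    have q1 : 1 + 1 + exp a = 2 + exp a := by ring
    have q2 : 1 + exp a + 1 = 2 + exp a := by ring
    have q3 : 1 + (exp a)⁻¹ + (exp a)⁻¹ = (2 + exp a) / exp a := by field_simp; ring
    rw [q1, q2, q3]
    field_simp
    ring
  linear_combination p1 + p2 + p3 + hfin
end

section
/- $\int_{0}^{\infty} \frac{t \ln\left(2\sinh t\right)}{\left[3t^{2} + \ln^{2}\left(2\sinh t\right)\right]^{2}}\, dt = 0$. -/
/-!
Put `u = 2t` and `v = φ(u) = -log (1 - e^{-u})`, so that `e^{-u} + e^{-v} = 1`. Then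
`log (2 sinh t) = t - v`, and with `D(u, v) = u² - uv + v²` the integrand is a quarter of
`h(u, v) = (u² - 2uv) / D(u, v)²`.

The map `φ` is a decreasing involution of `(0, ∞)`, so the substitution `u ↦ φ(u)` gives
`∫ h(u, φ(u)) du = ∫ |φ'(u)| h(φ(u), u) du`. The sum of these two integrands is the exact derivative
of `G(u) = (φ(u) - u) / D(u, φ(u))` (`hasDerivAt_G`), and `G` tends to `0` at both `0` and `∞`.
Hence twice the integral vanishes. In complex terms, `h du` is up to a constant the imaginary part
of `du / (ωu - v)²` with `ω = e^{iπ/3}`, and the symmetry `u ↔ v` shows that the integral of this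
form is its own conjugate.
-/

open MeasureTheory Set Filter Topology

namespace LogSinhIntegral

/-- The involution `u ↦ v` of `(0, ∞)` determined by `e^{-u} + e^{-v} = 1`. -/
noncomputable def φ (u : ℝ) : ℝ := -Real.log (1 - Real.exp (-u))

/-- The quadratic form `|ωu - v|²`, where `ω = e^{iπ/3}`. -/
def D (u v : ℝ) : ℝ := u ^ 2 - u * v + v ^ 2

/-- The integrand, up to a constant, as a function of the pair `(u, v)`. -/
noncomputable def h (u v : ℝ) : ℝ := (u ^ 2 - 2 * u * v) / D u v ^ 2

/-- The primitive of the symmetrised integrand. -/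
noncomputable def G (u : ℝ) : ℝ := (φ u - u) / D u (φ u)

lemma one_sub_exp_pos {u : ℝ} (hu : 0 < u) : 0 < 1 - Real.exp (-u) := by
  have : Real.exp (-u) < 1 := Real.exp_lt_one_iff.mpr (by linarith)
  linarith

lemma exp_neg_φ {u : ℝ} (hu : 0 < u) : Real.exp (-φ u) = 1 - Real.exp (-u) := by
  rw [φ, neg_neg, Real.exp_log (one_sub_exp_pos hu)]

lemma φ_pos {u : ℝ} (hu : 0 < u) : 0 < φ u := by
  have h1 := exp_neg_φ hu
  have h2 : Real.exp (-φ u) < 1 := by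
    rw [h1]; linarith [Real.exp_pos (-u)]
  rw [Real.exp_lt_one_iff] at h2
  linarith

lemma φ_φ {u : ℝ} (hu : 0 < u) : φ (φ u) = u := by
  rw [φ, exp_neg_φ hu, sub_sub_cancel, Real.log_exp, neg_neg]

lemma φ_injOn : InjOn φ (Ioi 0) := by
  intro a ha b hb hab
  rw [← φ_φ ha, hab, φ_φ hb]

lemma φ_image : φ '' Ioi 0 = Ioi 0 := by
  ext x
  constructor
  · rintro ⟨y, hy, rfl⟩
    exact φ_pos hy
  · intro hx
    exact ⟨φ x, φ_pos hx, φ_φ hx⟩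

/-- The derivative of `φ`, which is negative on `(0, ∞)`. -/
noncomputable def φ' (u : ℝ) : ℝ := -(Real.exp (-u) / (1 - Real.exp (-u)))

lemma φ'_neg {u : ℝ} (hu : 0 < u) : φ' u < 0 :=
  neg_lt_zero.mpr (div_pos (Real.exp_pos _) (one_sub_exp_pos hu))

lemma hasDerivAt_φ {u : ℝ} (hu : 0 < u) : HasDerivAt φ (φ' u) u := by
  have h1 : HasDerivAt (fun x : ℝ => 1 - Real.exp (-x)) (Real.exp (-u)) u := by
    simpa using ((hasDerivAt_neg u).exp).const_sub 1
  exact (h1.log (one_sub_exp_pos hu).ne').neg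

lemma D_comm (u v : ℝ) : D u v = D v u := by
  unfold D; ring

lemma D_pos {u : ℝ} (hu : 0 < u) (v : ℝ) : 0 < D u v := by
  unfold D; nlinarith [sq_nonneg (u - 2 * v), pow_pos hu 2]

/-- Since `e^{-x} ≥ 1 - x`, the constraint `e^{-u} + e^{-v} = 1` keeps `(u, v)` away from the
origin. -/
lemma one_le_add_φ {u : ℝ} (hu : 0 < u) : 1 ≤ u + φ u := by
  have h1 := exp_neg_φ hu
  have h2 := Real.add_one_le_exp (-φ u)
  have h3 := Real.add_one_le_exp (-u)
  linarith

lemma one_add_sq_le {u : ℝ} (hu : 0 < u) : 1 + u ^ 2 ≤ 6 * D u (φ u) := by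
  have h1 := one_le_add_φ hu
  unfold D
  nlinarith [sq_nonneg (u - φ u), sq_nonneg (u - 2 * φ u), sq_nonneg (u + φ u - 1)]

lemma abs_h_le {u : ℝ} (hu : 0 < u) : |h u (φ u)| ≤ 12 * (1 + u ^ 2)⁻¹ := by
  have hD := D_pos hu (φ u)
  have h1 := one_add_sq_le hu
  have h2 : |u ^ 2 - 2 * u * φ u| ≤ 2 * D u (φ u) := by
    unfold D
    rw [abs_le]
    constructor <;> nlinarith [sq_nonneg (u - φ u), sq_nonneg u, sq_nonneg (φ u)]
  rw [h, abs_div, abs_of_pos (pow_pos hD 2), ← div_eq_mul_inv,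
    div_le_div_iff₀ (pow_pos hD 2) (by positivity)]
  calc |u ^ 2 - 2 * u * φ u| * (1 + u ^ 2) ≤ (2 * D u (φ u)) * (6 * D u (φ u)) := by gcongr
    _ = 12 * D u (φ u) ^ 2 := by ring

lemma integrableOn_h : IntegrableOn (fun u => h u (φ u)) (Ioi 0) := by
  refine Integrable.mono' (integrable_inv_one_add_sq.const_mul 12).integrableOn ?_ ?_
  · have : Measurable (fun u => h u (φ u)) := by
      unfold h D φ
      fun_prop
    exact this.aestronglyMeasurable
  · filter_upwards [ae_restrict_mem measurableSet_Ioi] with u hu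
    exact abs_h_le hu

lemma φ_hasDerivWithinAt (u : ℝ) (hu : u ∈ Ioi (0 : ℝ)) :
    HasDerivWithinAt φ (φ' u) (Ioi 0) u :=
  (hasDerivAt_φ hu).hasDerivWithinAt

/-- The integrand after the substitution `u ↦ φ u`. -/
lemma subst_eq {u : ℝ} (hu : 0 < u) :
    |φ' u| • h (φ u) (φ (φ u)) = -φ' u * h (φ u) u := by
  rw [φ_φ hu, abs_of_neg (φ'_neg hu), smul_eq_mul]

lemma integrableOn_subst : IntegrableOn (fun u => -φ' u * h (φ u) u) (Ioi 0) := by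
  have h1 := integrableOn_h
  rw [← φ_image, integrableOn_image_iff_integrableOn_abs_deriv_smul measurableSet_Ioi
    φ_hasDerivWithinAt φ_injOn] at h1
  exact h1.congr_fun (fun u hu => subst_eq hu) measurableSet_Ioi

lemma integral_subst :
    ∫ u in Ioi 0, h u (φ u) = ∫ u in Ioi 0, -φ' u * h (φ u) u := by
  have h1 := integral_image_eq_integral_abs_deriv_smul measurableSet_Ioi
    φ_hasDerivWithinAt φ_injOn (fun u => h u (φ u))
  rw [φ_image] at h1
  rw [h1]
  exact setIntegral_congr_fun measurableSet_Ioi fun u hu => subst_eq hu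

lemma hasDerivAt_G {u : ℝ} (hu : 0 < u) :
    HasDerivAt G (h u (φ u) + -φ' u * h (φ u) u) u := by
  have hD := D_pos hu (φ u)
  have hφ := hasDerivAt_φ hu
  have hid := hasDerivAt_id' u
  have h1 : HasDerivAt (fun x => D x (φ x))
      (2 * u - (φ u + u * φ' u) + 2 * φ u * φ' u) u := by
    have := ((hid.pow 2).sub (hid.mul hφ)).add (hφ.pow 2)
    simpa [D] using! this
  have h2 := (hφ.sub hid).div h1 hD.ne'
  refine h2.congr_deriv ?_
  rw [h, h, D_comm (φ u) u]
  field_simp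
  unfold D
  simp only [Pi.sub_apply]
  ring

lemma tendsto_G_atTop : Tendsto G atTop (𝓝 0) := by
  have h1 : Tendsto (fun u : ℝ => 2 * u⁻¹) atTop (𝓝 0) := by
    simpa using tendsto_inv_atTop_zero.const_mul (2 : ℝ)
  refine squeeze_zero_norm' ?_ h1
  filter_upwards [eventually_gt_atTop 0] with u hu
  have hD := D_pos hu (φ u)
  rw [G, Real.norm_eq_abs, abs_div, abs_of_pos hD, ← div_eq_mul_inv, div_le_div_iff₀ hD hu,
    ← abs_of_pos hu, ← abs_mul, abs_of_pos hu, abs_le]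
  unfold D
  constructor <;> nlinarith [sq_nonneg (u - φ u), sq_nonneg u, sq_nonneg (φ u)]

lemma tendsto_φ_zero : Tendsto φ (𝓝[>] 0) atTop := by
  have h1 : Tendsto (fun u : ℝ => 1 - Real.exp (-u)) (𝓝[>] 0) (𝓝[>] 0) := by
    refine tendsto_nhdsWithin_iff.mpr ⟨?_, ?_⟩
    · have : Continuous (fun u : ℝ => 1 - Real.exp (-u)) := by fun_prop
      exact (this.tendsto' 0 0 (by simp)).mono_left nhdsWithin_le_nhds
    · filter_upwards [self_mem_nhdsWithin] with u hu
      exact one_sub_exp_pos hu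
  exact tendsto_neg_atBot_atTop.comp (Real.tendsto_log_nhdsGT_zero.comp h1)

/-- `G` is odd under the involution `φ`, so its limit at `0` follows from the one at `∞`. -/
lemma tendsto_G_zero : Tendsto G (𝓝[>] 0) (𝓝 0) := by
  have h1 := (tendsto_G_atTop.comp tendsto_φ_zero).neg
  rw [neg_zero] at h1
  refine h1.congr' ?_
  filter_upwards [self_mem_nhdsWithin] with u hu
  rw [Function.comp, G, G, φ_φ hu, D_comm (φ u) u, ← neg_div, neg_sub]

lemma integral_h : ∫ u in Ioi 0, h u (φ u) = 0 := by
  -- `log 0 = 0` makes `φ 0 = 0`, hence `G 0 = 0 / 0 = 0`, which agrees with the limit at `0`.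
  have hG0 : G 0 = 0 := by simp [G, φ]
  have hc : ContinuousWithinAt G (Ici 0) 0 := by
    rw [← continuousWithinAt_Ioi_iff_Ici, ContinuousWithinAt, hG0]
    exact tendsto_G_zero
  have h1 := integral_Ioi_of_hasDerivAt_of_tendsto hc (fun u hu => hasDerivAt_G hu)
    (integrableOn_h.add integrableOn_subst) tendsto_G_atTop
  rw [integral_add integrableOn_h integrableOn_subst, ← integral_subst, hG0] at h1
  linarith

lemma log_two_sinh {t : ℝ} (ht : 0 < t) : Real.log (2 * Real.sinh t) = t - φ (2 * t) := by
  have h1 : 2 * Real.sinh t = Real.exp t * (1 - Real.exp (-(2 * t))) := by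
    rw [Real.sinh_eq, mul_sub, ← Real.exp_add]
    ring_nf
  rw [h1, Real.log_mul (Real.exp_pos t).ne' (one_sub_exp_pos (by linarith)).ne', Real.log_exp, φ]
  ring

lemma integrand_eq {t : ℝ} (ht : 0 < t) :
    t * Real.log (2 * Real.sinh t) / (3 * t ^ 2 + Real.log (2 * Real.sinh t) ^ 2) ^ 2
      = 1 / 4 * h (2 * t) (φ (2 * t)) := by
  have hD : 3 * t ^ 2 + (t - φ (2 * t)) ^ 2 = D (2 * t) (φ (2 * t)) := by
    unfold D; ring
  rw [log_two_sinh ht, hD, h]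
  ring

end LogSinhIntegral

open LogSinhIntegral in
/-- `∫₀^∞ t ln(2 sinh t) / (3t² + ln²(2 sinh t))² dt = 0`. -/
theorem stmt_14 :
    ∫ t in Set.Ioi (0 : ℝ),
        t * Real.log (2 * Real.sinh t) /
          (3 * t ^ 2 + Real.log (2 * Real.sinh t) ^ 2) ^ 2
      = 0 := by
  rw [setIntegral_congr_fun measurableSet_Ioi fun t ht => integrand_eq ht,
    integral_const_mul, integral_comp_mul_left_Ioi (fun u => h u (φ u)) 0 two_pos, mul_zero,
    integral_h]
  simp
end

section
/- The zero set of the entire function $h(z) = e^{i\sqrt{3}\, z} + 2\cosh z$ is invariant under multiplication by $\omega = e^{2\pi i/3}$: for every complex $z$, $e^{i\sqrt{3} z} + 2\cosh z = 0$ if and only if $e^{i\sqrt{3}\, \omega z} + 2\cosh(\omega z) = 0$. Moreover, $h$ has no zeros on the real axis. -/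
/-!
Write `h(z) = e^{i√3 z} + e^z + e^{-z}` and `ω = e^{2πi/3} = (-1 + i√3)/2`. Multiplication by `ω`
permutes the three exponents `i√3, 1, -1` up to the common shift `ω² = -(1 + i√3)/2`, so that
`h(ωz) = e^{ω² z} h(z)` (`exp_add_two_cosh_omega_mul`), and the exponential factor never vanishes.
On the real axis `|e^{i√3 x}| = 1 < 2 ≤ 2 cosh x`, so the two terms cannot cancel.
-/

lemma exp_two_pi_I_div_three :
    Complex.exp (2 * Real.pi * Complex.I / 3) = (-1 + Complex.I * Real.sqrt 3) / 2 := by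
  have h : (2 * Real.pi * Complex.I / 3 : ℂ) = ((Real.pi - Real.pi / 3 : ℝ) : ℂ) * Complex.I := by
    push_cast; ring
  rw [h, Complex.exp_mul_I, ← Complex.ofReal_cos, ← Complex.ofReal_sin, Real.cos_pi_sub,
    Real.sin_pi_sub, Real.cos_pi_div_three, Real.sin_pi_div_three]
  push_cast; ring

/-- With `s = i√3` (only `s² = -3` matters) and `ω = (-1 + s)/2`, the function
`h(z) = e^{sz} + 2 cosh z` satisfies `h(ωz) = e^{ω² z} h(z)`. -/
lemma exp_add_two_cosh_omega_mul {s : ℂ} (hs : s * s = -3) (z : ℂ) :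
    Complex.exp (s * ((-1 + s) / 2 * z)) + 2 * Complex.cosh ((-1 + s) / 2 * z) =
      Complex.exp (-(1 + s) / 2 * z) * (Complex.exp (s * z) + 2 * Complex.cosh z) := by
  have h1 : s * ((-1 + s) / 2 * z) = -(1 + s) / 2 * z + -z := by
    linear_combination z / 2 * hs
  have h2 : (-1 + s) / 2 * z = -(1 + s) / 2 * z + s * z := by ring
  have h3 : -((-1 + s) / 2 * z) = -(1 + s) / 2 * z + z := by ring
  rw [Complex.two_cosh, Complex.two_cosh, h3, h1, h2, Complex.exp_add, Complex.exp_add,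
    Complex.exp_add]
  ring

/-- The zero set of `h(z) = e^{i√3 z} + 2 cosh z` is invariant under
multiplication by `ω = e^{2πi/3}`, and `h` has no zeros on the real axis. -/
theorem stmt_19 :
    (∀ z : ℂ, Complex.exp (Complex.I * Real.sqrt 3 * z) + 2 * Complex.cosh z = 0 ↔
      Complex.exp (Complex.I * Real.sqrt 3 * (Complex.exp (2 * Real.pi * Complex.I / 3) * z)) +
        2 * Complex.cosh (Complex.exp (2 * Real.pi * Complex.I / 3) * z) = 0) ∧
    ∀ x : ℝ, Complex.exp (Complex.I * Real.sqrt 3 * x) + 2 * Complex.cosh (x : ℂ) ≠ 0 := by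
  refine ⟨fun z => ?_, fun x hx => ?_⟩
  · have h3 : ((Real.sqrt 3 : ℝ) : ℂ) * (Real.sqrt 3 : ℝ) = 3 := by
      rw [← Complex.ofReal_mul, Real.mul_self_sqrt (by norm_num)]; norm_num
    have hs : (Complex.I * Real.sqrt 3) * (Complex.I * Real.sqrt 3) = -3 := by
      linear_combination (Real.sqrt 3 * Real.sqrt 3 : ℂ) * Complex.I_mul_I - h3
    rw [exp_two_pi_I_div_three, exp_add_two_cosh_omega_mul hs, mul_eq_zero,
      or_iff_right (Complex.exp_ne_zero _)]
  · have hn : ‖Complex.exp (Complex.I * Real.sqrt 3 * x)‖ = 1 := by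
      have h : Complex.I * Real.sqrt 3 * x = ((Real.sqrt 3 * x : ℝ) : ℂ) * Complex.I := by
        push_cast; ring
      rw [h, Complex.norm_exp_ofReal_mul_I]
    have hc : ‖2 * Complex.cosh (x : ℂ)‖ = 2 * Real.cosh x := by
      rw [← Complex.ofReal_cosh, norm_mul, Complex.norm_real, Real.norm_eq_abs,
        abs_of_pos (Real.cosh_pos x)]
      norm_num
    rw [eq_neg_of_add_eq_zero_left hx, norm_neg, hc] at hn
    linarith [Real.one_le_cosh x]
end
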